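/- arXiv:1702.08698 — 2 statements merged into one kernel-verified Lean document; each statement's English description precedes it below -/
import Mathlib

section
/- Let f satisfy Condition B with constant K, let φ be a branching mechanism satisfying Grey's condition, and let (Q_t)_{t≥0} be the transition semigroup of the CB-process with branching mechanism φ. Fix t ≥ 0 and suppose that ∫_{[0,∞)} f(z) Q_t(x₀,dz) < ∞ for some x₀ > 0. Then for every probability measure μ on [0,∞) (the law of the initial state X_0), one has ∫_{[0,∞)} ∫_{[0,∞)} f(y) Q_t(x,dy) μ(dx) < ∞ if and only if ∫_{[0,∞)} f(x) μ(dx) < ∞. -/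
open MeasureTheory Set Filter

noncomputable section

/-- A positive continuous function on `[0,∞)` satisfying Condition A:
there exist `c ≥ 0` and `K > 0` such that `f` is convex on `[c,∞)`,
`f (x*y) ≤ K * f x * f y` for `x, y ∈ [c,∞)`, and `f` is bounded on `[0,c)`. -/
def ConditionA (f : ℝ → ℝ) : Prop :=
  ContinuousOn f (Set.Ici 0) ∧ (∀ x, 0 ≤ x → 0 < f x) ∧
  ∃ c, 0 ≤ c ∧ ∃ K, 0 < K ∧
    ConvexOn ℝ (Set.Ici c) f ∧
    (∀ x y, c ≤ x → c ≤ y → f (x * y) ≤ K * f x * f y) ∧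
    ∃ M, ∀ x, 0 ≤ x → x < c → f x ≤ M

/-- Condition B with constant `K`: `f` is convex and nondecreasing on `[0,∞)`,
submultiplicative up to the constant `K`, and `f > 1` on `[0,∞)`. -/
def ConditionB (f : ℝ → ℝ) (K : ℝ) : Prop :=
  0 < K ∧ ConvexOn ℝ (Set.Ici 0) f ∧ MonotoneOn f (Set.Ici 0) ∧
  (∀ x y, 0 ≤ x → 0 ≤ y → f (x * y) ≤ K * f x * f y) ∧
  (∀ x, 0 ≤ x → 1 < f x)

/-- `φ` is a branching mechanism with parameters `β ∈ ℝ`, `σ ≥ 0` and Lévy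
measure `m` (a σ-finite measure carried by `(0,∞)` with `∫ 1 ∧ z² m(dz) < ∞`):
`φ(λ) = βλ + σ²λ²/2 + ∫ (e^{-zλ} - 1 + zλ 1_{z ≤ 1}) m(dz)`. -/
structure IsBranchingMechanism (φ : ℝ → ℝ) (β σ : ℝ) (m : Measure ℝ) : Prop where
  sigma_nonneg : 0 ≤ σ
  sigmaFinite : SigmaFinite m
  carrier : m (Set.Iic 0) = 0
  levy_finite : ∫⁻ z, ENNReal.ofReal (min 1 (z ^ 2)) ∂m < ⊤
  form : ∀ l, 0 ≤ l →
    φ l = β * l + σ ^ 2 * l ^ 2 / 2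
      + ∫ z, (Real.exp (-(z * l)) - 1 + (if z ≤ 1 then z * l else 0)) ∂m

/-- Grey's condition: `∫_{0+} φ(λ)⁻¹ dλ = ∞`, i.e. `φ⁻¹` fails to be
integrable on every right neighbourhood of `0`. -/
def GreyCondition (φ : ℝ → ℝ) : Prop :=
  ∀ ε, 0 < ε → ¬ IntegrableOn (fun l => (φ l)⁻¹) (Set.Ioo 0 ε) volume

/-- `v t l` is the nonnegative solution of `v_t(λ) = λ - ∫_0^t φ(v_s(λ)) ds`. -/
def IsCumulant (φ : ℝ → ℝ) (v : ℝ → ℝ → ℝ) : Prop :=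
  ∀ l, 0 ≤ l → ∀ t, 0 ≤ t →
    0 ≤ v t l ∧ v t l = l - ∫ s in (0:ℝ)..t, φ (v s l)

/-- `(Q t)_{t ≥ 0}` is the transition semigroup of the CB-process with cumulant
`v`: each `Q t x` is a probability measure on `[0,∞)` with Laplace transform
`∫ e^{-λ y} Q_t(x, dy) = e^{-x v_t(λ)}`. -/
def IsCBSemigroup (v : ℝ → ℝ → ℝ) (Q : ℝ → ℝ → Measure ℝ) : Prop :=
  ∀ t x, 0 ≤ t → 0 ≤ x →
    IsProbabilityMeasure (Q t x) ∧ Q t x (Set.Iio 0) = 0 ∧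
    ∀ l, 0 ≤ l → ∫ y, Real.exp (-(l * y)) ∂(Q t x) = Real.exp (-(x * v t l))

/-- `ψ` is an immigration mechanism with drift `h ≥ 0` and immigration measure
`ν` (a σ-finite measure carried by `(0,∞)` with `∫ 1 ∧ z ν(dz) < ∞`):
`ψ(λ) = hλ + ∫ (1 - e^{-λz}) ν(dz)`. -/
structure IsImmigrationMechanism (ψ : ℝ → ℝ) (h : ℝ) (ν : Measure ℝ) : Prop where
  h_nonneg : 0 ≤ h
  sigmaFinite : SigmaFinite ν
  carrier : ν (Set.Iic 0) = 0
  levy_finite : ∫⁻ z, ENNReal.ofReal (min 1 z) ∂ν < ⊤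
  form : ∀ l, 0 ≤ l → ψ l = h * l + ∫ z, (1 - Real.exp (-(l * z))) ∂ν

/-- `(Q^γ t)_{t ≥ 0}` is the transition semigroup of the CBI-process with
cumulant `v` and immigration mechanism `ψ`: each `Qγ t x` is a probability
measure on `[0,∞)` with Laplace transform
`∫ e^{-λ y} Q^γ_t(x, dy) = exp(-x v_t(λ) - ∫_0^t ψ(v_s(λ)) ds)`. -/
def IsCBISemigroup (v : ℝ → ℝ → ℝ) (ψ : ℝ → ℝ) (Qγ : ℝ → ℝ → Measure ℝ) : Prop :=
  ∀ t x, 0 ≤ t → 0 ≤ x →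
    IsProbabilityMeasure (Qγ t x) ∧ Qγ t x (Set.Iio 0) = 0 ∧
    ∀ l, 0 ≤ l →
      ∫ y, Real.exp (-(l * y)) ∂(Qγ t x)
        = Real.exp (-(x * v t l) - ∫ s in (0:ℝ)..t, ψ (v s l))

/-!
At a fixed time `t` the laws `q x = Q t x` form a convolution semigroup in the initial mass `x`
(the branching property), with Laplace transform `exp (-x w(λ))`, `w = v t`. Let
`M x = ∫ f d(q x)`. The claim reduces to `M` and `f` dominating each other up to constants.

* `M ≲ f`: `M` is nondecreasing, and a sum of `n` independent copies of `Y` is dominated by `n Y`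
  in the convex order, so `M (n x₀) ≤ ∫ f (n y) q x₀(dy) ≤ K f(n) M x₀`. Take `n ≈ x / x₀`.
* `f ≲ M`: by Chernoff's inequality `q x` charges `((x w(l) - 1) / l, ∞)` with mass at least
  `1 - e⁻¹`, so `M x` is at least of order `f ((x w(l) - 1) / l)`, which is comparable to `f x` as
  soon as `w(l) > 0` for some `l > 0`.

For the CB-process `w = v t` is positive on `(0, ∞)` since `φ(λ) ≤ C λ` on bounded intervals, so the
cumulant decays at most exponentially in time.
-/

open scoped ENNReal

section Laplace

lemma ext_of_forall_integral_pow_eq {a b : ℝ} {P P' : Measure (Icc a b)} [IsFiniteMeasure P]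
    [IsFiniteMeasure P'] (h : ∀ n : ℕ, ∫ x, (x : ℝ) ^ n ∂P = ∫ x, (x : ℝ) ^ n ∂P') : P = P' := by
  let I (ν : Measure (Icc a b)) (g : C(Icc a b, ℝ)) : ℝ := ∫ x, g x ∂ν
  have continuous_I (ν : Measure (Icc a b)) [IsFiniteMeasure ν] : Continuous (I ν) :=
    (continuous_integral.comp (ContinuousMap.toLp 1 ν ℝ).continuous).congr fun g ↦
      integral_congr_ae (ContinuousMap.coeFn_toLp ν g)
  have I_eval (ν : Measure (Icc a b)) [IsFiniteMeasure ν] (p : Polynomial ℝ) :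
      I ν (p.toContinuousMapOn _) =
        ∑ n ∈ Finset.range (p.natDegree + 1), p.coeff n * ∫ x, (x : ℝ) ^ n ∂ν := by
    simp only [I, Polynomial.toContinuousMapOn_apply, Polynomial.toContinuousMap_apply,
      Polynomial.eval_eq_sum_range]
    rw [integral_finsetSum _ fun n _ ↦ ?_]
    · simp only [integral_const_mul]
    · exact Continuous.integrable_of_hasCompactSupport (by fun_prop)
        (HasCompactSupport.of_compactSpace _)
  have polynomials_subset : (polynomialFunctions (Icc a b) : Set C(Icc a b, ℝ)) ⊆
      {g | I P g = I P' g} := by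
    rintro _ ⟨p, -, rfl⟩
    exact (I_eval P p).trans (by simp only [h]; exact (I_eval P' p).symm)
  have dense : closure (polynomialFunctions (Icc a b) : Set C(Icc a b, ℝ)) = univ :=
    congrArg SetLike.coe (polynomialFunctions_closure_eq_top a b)
  have I_eq : univ ⊆ {g | I P g = I P' g} :=
    dense ▸ closure_minimal polynomials_subset (isClosed_eq (continuous_I P) (continuous_I P'))
  exact ext_of_forall_integral_eq_of_IsFiniteMeasure fun g ↦ I_eq (mem_univ g.toContinuousMap)

lemma ext_of_forall_integral_exp_neg_nat_mul_eq {P P' : Measure ℝ} [IsFiniteMeasure P]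
    [IsFiniteMeasure P'] (hP : ∀ᵐ y ∂P, 0 ≤ y) (hP' : ∀ᵐ y ∂P', 0 ≤ y)
    (h : ∀ n : ℕ, ∫ y, Real.exp (-(n * y)) ∂P = ∫ y, Real.exp (-(n * y)) ∂P') : P = P' := by
  let e (y : ℝ) : Icc (0 : ℝ) 1 := projIcc 0 1 zero_le_one (Real.exp (-y))
  have e_apply {y : ℝ} (hy : 0 ≤ y) : (e y : ℝ) = Real.exp (-y) :=
    congrArg Subtype.val (projIcc_of_mem zero_le_one ⟨(Real.exp_pos _).le, by simpa using hy⟩)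
  have measurable_e : Measurable e := by fun_prop
  have map_neg_log_map_e (ν : Measure ℝ) (hν : ∀ᵐ y ∂ν, 0 ≤ y) :
      (ν.map e).map (fun u : Icc (0 : ℝ) 1 ↦ -Real.log u) = ν := by
    rw [Measure.map_map (by fun_prop) measurable_e]
    refine (Measure.map_congr ?_).trans Measure.map_id
    filter_upwards [hν] with y hy
    simp [e_apply hy]
  have integral_pow_map_e (ν : Measure ℝ) (hν : ∀ᵐ y ∂ν, 0 ≤ y) (n : ℕ) :
      ∫ u, (u : ℝ) ^ n ∂(ν.map e) = ∫ y, Real.exp (-(n * y)) ∂ν := by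
    rw [integral_map (by fun_prop) (by fun_prop)]
    refine integral_congr_ae ?_
    filter_upwards [hν] with y hy
    rw [e_apply hy, ← Real.exp_nat_mul, mul_neg]
  have map_e_eq : P.map e = P'.map e := ext_of_forall_integral_pow_eq fun n ↦ by
    rw [integral_pow_map_e P hP, integral_pow_map_e P' hP', h]
  rw [← map_neg_log_map_e P hP, map_e_eq, map_neg_log_map_e P' hP']

lemma integrable_exp_neg_mul {P : Measure ℝ} [IsFiniteMeasure P] (hP : ∀ᵐ y ∂P, 0 ≤ y) {l : ℝ}
    (hl : 0 ≤ l) : Integrable (fun y ↦ Real.exp (-(l * y))) P := by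
  refine .of_bound (by fun_prop) 1 ?_
  filter_upwards [hP] with y hy
  simpa using mul_nonneg hl hy

lemma ae_nonneg_of_measure_Iio_eq_zero {P : Measure ℝ} (hP : P (Iio 0) = 0) : ∀ᵐ y ∂P, 0 ≤ y := by
  simpa using measure_eq_zero_iff_ae_notMem.1 hP

lemma ae_nonneg_conv {P P' : Measure ℝ} (hP : ∀ᵐ y ∂P, 0 ≤ y) (hP' : ∀ᵐ y ∂P', 0 ≤ y) :
    ∀ᵐ y ∂(P ∗ P'), 0 ≤ y := by
  rw [Measure.conv, ae_map_iff (by fun_prop) measurableSet_Ici]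
  filter_upwards [Measure.quasiMeasurePreserving_fst.ae hP,
    Measure.quasiMeasurePreserving_snd.ae hP'] with y hy hy'
  exact add_nonneg hy hy'

lemma mul_measure_Ioi_le_lintegral {P : Measure ℝ} (hP : ∀ᵐ y ∂P, 0 ≤ y) {g : ℝ → ℝ≥0∞}
    (hg : MonotoneOn g (Ici 0)) (r : ℝ) : g (max r 0) * P (Ioi r) ≤ ∫⁻ y, g y ∂P :=
  calc g (max r 0) * P (Ioi r)
      = ∫⁻ _ in Ioi r, g (max r 0) ∂P := by simp
    _ ≤ ∫⁻ y in Ioi r, g y ∂P := by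
        refine lintegral_mono_ae ?_
        filter_upwards [ae_restrict_of_ae hP, ae_restrict_mem measurableSet_Ioi] with y hy hry
        exact hg (le_max_right r 0) hy (max_le (le_of_lt hry) hy)
    _ ≤ ∫⁻ y, g y ∂P := setLIntegral_le_lintegral _ _

lemma lintegral_lintegral_convexCombo_le {E : Type*} [AddCommMonoid E] [Module ℝ E]
    [MeasurableSpace E] {P : Measure E} [IsProbabilityMeasure P] {S : Set E}
    (hP : ∀ᵐ a ∂P, a ∈ S) {g : E → ℝ} (hgm : Measurable g) (hg : ConvexOn ℝ S g) {s t : ℝ}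
    (hs : 0 ≤ s) (ht : 0 ≤ t) (hst : s + t = 1) :
    ∫⁻ a, ∫⁻ b, ENNReal.ofReal (g (s • a + t • b)) ∂P ∂P ≤ ∫⁻ a, ENNReal.ofReal (g a) ∂P := by
  let G (a : E) : ℝ≥0∞ := ENNReal.ofReal (g a)
  have measurable_G : Measurable G := by fun_prop
  have jensen {a b : E} (ha : a ∈ S) (hb : b ∈ S) :
      G (s • a + t • b) ≤ ENNReal.ofReal s * G a + ENNReal.ofReal t * G b :=
    calc G (s • a + t • b)
        ≤ ENNReal.ofReal (s * g a + t * g b) :=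
          ENNReal.ofReal_le_ofReal (hg.2 ha hb hs ht hst)
      _ ≤ ENNReal.ofReal (s * g a) + ENNReal.ofReal (t * g b) := ENNReal.ofReal_add_le
      _ = ENNReal.ofReal s * G a + ENNReal.ofReal t * G b := by
          rw [ENNReal.ofReal_mul hs, ENNReal.ofReal_mul ht]
  calc ∫⁻ a, ∫⁻ b, G (s • a + t • b) ∂P ∂P
      ≤ ∫⁻ a, ∫⁻ b, (ENNReal.ofReal s * G a + ENNReal.ofReal t * G b) ∂P ∂P := by
        refine lintegral_mono_ae (hP.mono fun a ha ↦ ?_)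
        exact lintegral_mono_ae (hP.mono fun b hb ↦ jensen ha hb)
    _ = ENNReal.ofReal s * ∫⁻ a, G a ∂P + ENNReal.ofReal t * ∫⁻ b, G b ∂P := by
        simp [lintegral_add_left, lintegral_add_right, lintegral_const_mul, measurable_G]
    _ = ∫⁻ a, G a ∂P := by
        rw [← add_mul, ← ENNReal.ofReal_add hs ht, hst, ENNReal.ofReal_one, one_mul]

end Laplace

/-- `(q x)_{x ≥ 0}` are the marginal laws of a subordinator with Laplace exponent `w`, encoded by
their Laplace transforms: `q x` is a probability measure on `[0, ∞)` with
`∫ e^{-λ y} q x (dy) = e^{-x w(λ)}`. For the CB-process this is the family `Q t` at a fixed time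
`t`, with `w = v t`. -/
structure HasLaplaceExponent (q : ℝ → Measure ℝ) (w : ℝ → ℝ) : Prop where
  isProbabilityMeasure : ∀ ⦃x⦄, 0 ≤ x → IsProbabilityMeasure (q x)
  ae_nonneg : ∀ ⦃x⦄, 0 ≤ x → ∀ᵐ y ∂(q x), 0 ≤ y
  integral_exp : ∀ ⦃x⦄, 0 ≤ x → ∀ ⦃l⦄, 0 ≤ l →
    ∫ y, Real.exp (-(l * y)) ∂(q x) = Real.exp (-(x * w l))

lemma IsCBSemigroup.hasLaplaceExponent {v : ℝ → ℝ → ℝ} {Q : ℝ → ℝ → Measure ℝ}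
    (hQ : IsCBSemigroup v Q) {t : ℝ} (ht : 0 ≤ t) : HasLaplaceExponent (Q t) (v t) where
  isProbabilityMeasure x hx := (hQ t x ht hx).1
  ae_nonneg x hx := ae_nonneg_of_measure_Iio_eq_zero (hQ t x ht hx).2.1
  integral_exp x hx := (hQ t x ht hx).2.2

namespace HasLaplaceExponent

variable {q : ℝ → Measure ℝ} {w : ℝ → ℝ}

lemma add_eq_conv (hq : HasLaplaceExponent q w) {x y : ℝ} (hx : 0 ≤ x) (hy : 0 ≤ y) :
    q (x + y) = q x ∗ q y := by
  have hxy : 0 ≤ x + y := add_nonneg hx hy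
  have := hq.isProbabilityMeasure hx
  have := hq.isProbabilityMeasure hy
  have := hq.isProbabilityMeasure hxy
  have hconv : ∀ᵐ z ∂(q x ∗ q y), 0 ≤ z := ae_nonneg_conv (hq.ae_nonneg hx) (hq.ae_nonneg hy)
  refine ext_of_forall_integral_exp_neg_nat_mul_eq (hq.ae_nonneg hxy) hconv fun n ↦ ?_
  have hn : (0 : ℝ) ≤ n := n.cast_nonneg
  rw [integral_conv (integrable_exp_neg_mul hconv hn)]
  simp_rw [mul_add, neg_add, Real.exp_add, integral_const_mul, integral_mul_const]
  rw [hq.integral_exp hx hn, hq.integral_exp hy hn, hq.integral_exp hxy hn, ← Real.exp_add]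
  ring_nf

lemma lintegral_add (hq : HasLaplaceExponent q w) {x y : ℝ} (hx : 0 ≤ x) (hy : 0 ≤ y)
    {g : ℝ → ℝ≥0∞} (hg : Measurable g) :
    ∫⁻ z, g z ∂(q (x + y)) = ∫⁻ a, ∫⁻ b, g (a + b) ∂(q y) ∂(q x) := by
  have := hq.isProbabilityMeasure hx
  have := hq.isProbabilityMeasure hy
  rw [hq.add_eq_conv hx hy, Measure.lintegral_conv hg]

lemma monotoneOn_lintegral (hq : HasLaplaceExponent q w) {g : ℝ → ℝ≥0∞} (hgm : Measurable g)
    (hg : MonotoneOn g (Ici 0)) : MonotoneOn (fun x ↦ ∫⁻ z, g z ∂(q x)) (Ici 0) := by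
  intro x hx y _ hxy
  rw [mem_Ici] at hx
  have hd : 0 ≤ y - x := sub_nonneg.2 hxy
  have := hq.isProbabilityMeasure hd
  calc ∫⁻ a, g a ∂(q x)
      = ∫⁻ a, ∫⁻ _, g a ∂(q (y - x)) ∂(q x) := by simp
    _ ≤ ∫⁻ a, ∫⁻ b, g (a + b) ∂(q (y - x)) ∂(q x) := by
        refine lintegral_mono_ae ?_
        filter_upwards [hq.ae_nonneg hx] with a ha
        refine lintegral_mono_ae ?_
        filter_upwards [hq.ae_nonneg hd] with b hb
        exact hg ha (add_nonneg ha hb) (le_add_of_nonneg_right hb)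
    _ = ∫⁻ z, g z ∂(q y) := by
        rw [← hq.lintegral_add hx hd hgm, add_sub_cancel]

lemma lintegral_natCast_succ_mul_le (hq : HasLaplaceExponent q w) {x : ℝ} (hx : 0 ≤ x) (n : ℕ)
    {g : ℝ → ℝ} (hgm : Measurable g) (hg : ConvexOn ℝ (Ici 0) g) :
    ∫⁻ z, ENNReal.ofReal (g z) ∂(q ((n + 1 : ℕ) * x)) ≤
      ∫⁻ z, ENNReal.ofReal (g ((n + 1 : ℕ) * z)) ∂(q x) := by
  have := hq.isProbabilityMeasure hx
  induction n generalizing g with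
  | zero => simp
  | succ n ih =>
    let N : ℝ := (n + 1 + 1 : ℕ)
    have hN : 0 < N := by positivity
    have hn : (0 : ℝ) ≤ (n + 1 : ℕ) := Nat.cast_nonneg _
    have split : N * x = x + (n + 1 : ℕ) * x := by
      push_cast [N]
      ring
    have rescale (a b : ℝ) :
        a + (n + 1 : ℕ) * b = N * (N⁻¹ • a + ((n + 1 : ℕ) / N) • b) := by
      rw [smul_eq_mul, smul_eq_mul]
      field_simp
    have translate {a : ℝ} (ha : 0 ≤ a) : ConvexOn ℝ (Ici 0) fun b ↦ g (a + b) :=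
      (hg.translate_right a).subset (fun b hb ↦ add_nonneg ha hb) (convex_Ici 0)
    have dilate : ConvexOn ℝ (Ici 0) fun z ↦ g (N * z) :=
      (hg.comp_linearMap (LinearMap.mulLeft ℝ N)).subset (fun z hz ↦ mul_nonneg hN.le hz)
        (convex_Ici 0)
    calc ∫⁻ z, ENNReal.ofReal (g z) ∂(q (N * x))
        = ∫⁻ a, ∫⁻ b, ENNReal.ofReal (g (a + b)) ∂(q ((n + 1 : ℕ) * x)) ∂(q x) := by
          rw [split, hq.lintegral_add hx (mul_nonneg hn hx) (by fun_prop)]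
      _ ≤ ∫⁻ a, ∫⁻ b, ENNReal.ofReal (g (a + (n + 1 : ℕ) * b)) ∂(q x) ∂(q x) :=
          lintegral_mono_ae <| (hq.ae_nonneg hx).mono fun a ha ↦ ih (by fun_prop) (translate ha)
      _ = ∫⁻ a, ∫⁻ b, ENNReal.ofReal (g (N * (N⁻¹ • a + ((n + 1 : ℕ) / N) • b)))
            ∂(q x) ∂(q x) := by
          simp only [rescale]
      _ ≤ ∫⁻ z, ENNReal.ofReal (g (N * z)) ∂(q x) := by
          refine lintegral_lintegral_convexCombo_le (hq.ae_nonneg hx) (by fun_prop) dilate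
            (by positivity) (by positivity) ?_
          push_cast [N]
          field_simp
          ring

lemma ofReal_le_measure_Ioi (hq : HasLaplaceExponent q w) {x l : ℝ} (hx : 0 ≤ x) (hl : 0 < l) :
    ENNReal.ofReal (1 - Real.exp (-1)) ≤ q x (Ioi ((x * w l - 1) / l)) := by
  have := hq.isProbabilityMeasure hx
  let r : ℝ := (x * w l - 1) / l
  have chernoff : (q x).real (Iic r) ≤ Real.exp (-1) :=
    calc (q x).real (Iic r)
        ≤ Real.exp (- -l * r) * ProbabilityTheory.mgf id (q x) (-l) :=
          ProbabilityTheory.measure_le_le_exp_mul_mgf r (neg_nonpos.2 hl.le)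
            (by simpa using integrable_exp_neg_mul (hq.ae_nonneg hx) hl.le)
      _ = Real.exp (l * r) * Real.exp (-(x * w l)) := by
          simp [ProbabilityTheory.mgf, hq.integral_exp hx hl.le]
      _ = Real.exp (-1) := by
          rw [← Real.exp_add, mul_div_cancel₀ _ hl.ne']
          ring_nf
  rw [← compl_Iic, ← ofReal_measureReal, probReal_compl_eq_one_sub measurableSet_Iic]
  gcongr

end HasLaplaceExponent

namespace ConditionB

variable {f : ℝ → ℝ} {K : ℝ}

lemma const_pos (hf : ConditionB f K) : 0 < K := hf.1

lemma convexOn (hf : ConditionB f K) : ConvexOn ℝ (Ici 0) f := hf.2.1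

lemma monotoneOn (hf : ConditionB f K) : MonotoneOn f (Ici 0) := hf.2.2.1

lemma map_mul_le (hf : ConditionB f K) {x y : ℝ} (hx : 0 ≤ x) (hy : 0 ≤ y) :
    f (x * y) ≤ K * f x * f y :=
  hf.2.2.2.1 x y hx hy

lemma one_lt (hf : ConditionB f K) {x : ℝ} (hx : 0 ≤ x) : 1 < f x := hf.2.2.2.2 x hx

lemma pos (hf : ConditionB f K) {x : ℝ} (hx : 0 ≤ x) : 0 < f x := zero_lt_one.trans (hf.one_lt hx)

lemma monotoneOn_ofReal (hf : ConditionB f K) :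
    MonotoneOn (fun x ↦ ENNReal.ofReal (f x)) (Ici 0) :=
  fun _ hx _ hy hxy ↦ ENNReal.ofReal_le_ofReal (hf.monotoneOn hx hy hxy)

lemma map_mul_add_le (hf : ConditionB f K) {a b x : ℝ} (ha : 0 ≤ a) (hb : 0 ≤ b) (hx : 0 ≤ x) :
    f (a * x + b) ≤ (K * f (2 * a) + f (2 * b)) / 2 * f x := by
  have convexity : f (a * x + b) ≤ 1 / 2 * f (2 * a * x) + 1 / 2 * f (2 * b) := by
    have hax : 2 * a * x ∈ Ici 0 := mem_Ici.2 (by positivity)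
    have hb : 2 * b ∈ Ici 0 := mem_Ici.2 (by positivity)
    have midpoint : a * x + b = (1 / 2 : ℝ) • (2 * a * x) + (1 / 2 : ℝ) • (2 * b) := by
      rw [smul_eq_mul, smul_eq_mul]
      ring
    rw [midpoint]
    exact hf.convexOn.2 hax hb one_half_pos.le one_half_pos.le (add_halves 1)
  have submultiplicativity := hf.map_mul_le (x := 2 * a) (by positivity) hx
  have absorption : f (2 * b) ≤ f (2 * b) * f x :=
    le_mul_of_one_le_right (hf.pos (by positivity)).le (hf.one_lt hx).le
  linarith

lemma comp_max_zero (hf : ConditionB f K) : ConditionB (fun y ↦ f (max y 0)) K := by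
  have heq : EqOn f (fun y ↦ f (max y 0)) (Ici 0) := fun y hy ↦ by simp [max_eq_left (mem_Ici.1 hy)]
  refine ⟨hf.const_pos, hf.convexOn.congr heq, hf.monotoneOn.congr heq, fun x y hx hy ↦ ?_,
    fun x _ ↦ hf.one_lt (le_max_right x 0)⟩
  simpa [hx, hy, mul_nonneg hx hy] using hf.map_mul_le hx hy

lemma measurable_comp_max_zero (hf : ConditionB f K) : Measurable fun y ↦ f (max y 0) :=
  Monotone.measurable fun x y hxy ↦
    hf.monotoneOn (le_max_right x 0) (le_max_right y 0) (max_le_max_right 0 hxy)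

variable {q : ℝ → Measure ℝ} {w : ℝ → ℝ}

lemma lintegral_natCast_succ_mul_le (hf : ConditionB f K) (hfm : Measurable f)
    (hq : HasLaplaceExponent q w) {x : ℝ} (hx : 0 ≤ x) (n : ℕ) :
    ∫⁻ z, ENNReal.ofReal (f z) ∂(q ((n + 1 : ℕ) * x)) ≤
      ENNReal.ofReal (K * f (n + 1 : ℕ)) * ∫⁻ z, ENNReal.ofReal (f z) ∂(q x) := by
  have hn : (0 : ℝ) ≤ (n + 1 : ℕ) := Nat.cast_nonneg _
  have hKf : 0 ≤ K * f (n + 1 : ℕ) := mul_nonneg hf.const_pos.le (hf.pos hn).le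
  refine (hq.lintegral_natCast_succ_mul_le hx n hfm hf.convexOn).trans ?_
  rw [← lintegral_const_mul _ (by fun_prop)]
  refine lintegral_mono_ae ?_
  filter_upwards [hq.ae_nonneg hx] with z hz
  rw [← ENNReal.ofReal_mul hKf]
  exact ENNReal.ofReal_le_ofReal (hf.map_mul_le hn hz)

lemma exists_lintegral_le_mul (hf : ConditionB f K) (hq : HasLaplaceExponent q w) {x₀ : ℝ}
    (hx₀ : 0 < x₀) (hfin : ∫⁻ z, ENNReal.ofReal (f z) ∂(q x₀) < ⊤) :
    ∃ C ≠ ⊤, ∀ x, 0 ≤ x → ∫⁻ z, ENNReal.ofReal (f z) ∂(q x) ≤ C * ENNReal.ofReal (f x) := by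
  wlog hfm : Measurable f generalizing f
  · have lintegral_eq {x : ℝ} (hx : 0 ≤ x) : ∫⁻ z, ENNReal.ofReal (f (max z 0)) ∂(q x) =
        ∫⁻ z, ENNReal.ofReal (f z) ∂(q x) :=
      lintegral_congr_ae <| (hq.ae_nonneg hx).mono fun z hz ↦ by simp only [max_eq_left hz]
    obtain ⟨C, hC, hle⟩ := this hf.comp_max_zero (by rwa [lintegral_eq hx₀.le])
      hf.measurable_comp_max_zero
    refine ⟨C, hC, fun x hx ↦ ?_⟩
    simpa only [lintegral_eq hx, max_eq_left hx] using hle x hx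
  let M (x : ℝ) : ℝ≥0∞ := ∫⁻ z, ENNReal.ofReal (f z) ∂(q x)
  let C : ℝ := (K * f (2 * x₀⁻¹) + f (2 * 1)) / 2
  refine ⟨ENNReal.ofReal (K * C) * M x₀, by finiteness, fun x hx ↦ ?_⟩
  let n : ℕ := ⌊x / x₀⌋₊
  have x_le : x ≤ (n + 1 : ℕ) * x₀ := by
    rw [← div_le_iff₀ hx₀]
    exact_mod_cast (Nat.lt_floor_add_one (x / x₀)).le
  have le_x : ((n + 1 : ℕ) : ℝ) ≤ x₀⁻¹ * x + 1 := by
    push_cast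
    rw [inv_mul_eq_div]
    gcongr
    exact Nat.floor_le (by positivity)
  have f_le : f (n + 1 : ℕ) ≤ C * f x :=
    (hf.monotoneOn (mem_Ici.2 (by positivity)) (mem_Ici.2 (by positivity)) le_x).trans
      (hf.map_mul_add_le (by positivity) zero_le_one hx)
  calc M x ≤ M ((n + 1 : ℕ) * x₀) :=
        hq.monotoneOn_lintegral (by fun_prop) hf.monotoneOn_ofReal hx (hx.trans x_le) x_le
    _ ≤ ENNReal.ofReal (K * f (n + 1 : ℕ)) * M x₀ :=
        hf.lintegral_natCast_succ_mul_le hfm hq hx₀.le n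
    _ ≤ ENNReal.ofReal (K * C * f x) * M x₀ := by
        refine mul_le_mul_left (ENNReal.ofReal_le_ofReal ?_) _
        rw [mul_assoc]
        exact mul_le_mul_of_nonneg_left f_le hf.const_pos.le
    _ = ENNReal.ofReal (K * C) * M x₀ * ENNReal.ofReal (f x) := by
        rw [ENNReal.ofReal_mul' (hf.pos hx).le, mul_right_comm]

lemma exists_le_mul_lintegral (hf : ConditionB f K) (hq : HasLaplaceExponent q w) {l : ℝ}
    (hl : 0 < l) (hwl : 0 < w l) :
    ∃ C ≠ ⊤, ∀ x, 0 ≤ x → ENNReal.ofReal (f x) ≤ C * ∫⁻ z, ENNReal.ofReal (f z) ∂(q x) := by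
  let C : ℝ := (K * f (2 * (l / w l)) + f (2 * (1 / w l))) / 2
  let p : ℝ := 1 - Real.exp (-1)
  have hp : 0 < p := sub_pos.2 (by simp)
  refine ⟨ENNReal.ofReal (C / p), by finiteness, fun x hx ↦ ?_⟩
  let r : ℝ := (x * w l - 1) / l
  have hr : 0 ≤ max r 0 := le_max_right r 0
  have x_le : x ≤ l / w l * max r 0 + 1 / w l := by
    have x_mul_le : x * w l - 1 ≤ max r 0 * l := (div_le_iff₀ hl).1 (le_max_left r 0)
    rw [div_mul_eq_mul_div, ← add_div, le_div_iff₀ hwl]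
    linarith
  have f_le : f x ≤ C * f (max r 0) :=
    (hf.monotoneOn hx (hx.trans x_le) x_le).trans
      (hf.map_mul_add_le (by positivity) (by positivity) hr)
  calc ENNReal.ofReal (f x)
      ≤ ENNReal.ofReal (C / p * (f (max r 0) * p)) := by
        refine ENNReal.ofReal_le_ofReal (f_le.trans_eq ?_)
        field_simp
    _ = ENNReal.ofReal (C / p) * (ENNReal.ofReal (f (max r 0)) * ENNReal.ofReal p) := by
        rw [ENNReal.ofReal_mul' (mul_nonneg (hf.pos hr).le hp.le),
          ENNReal.ofReal_mul (hf.pos hr).le]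
    _ ≤ ENNReal.ofReal (C / p) * ∫⁻ z, ENNReal.ofReal (f z) ∂(q x) := by
        gcongr
        refine le_trans ?_ (mul_measure_Ioi_le_lintegral (hq.ae_nonneg hx) hf.monotoneOn_ofReal r)
        gcongr
        exact hq.ofReal_le_measure_Ioi hx hl

end ConditionB

section Cumulant

lemma le_mul_exp_of_le_add_mul_integral {u : ℝ → ℝ} {a b c C : ℝ} (hab : a ≤ b) (hC : 0 ≤ C)
    (hu : ContinuousOn u (Icc a b))
    (hle : ∀ s ∈ Icc a b, u s ≤ c + C * ∫ r in s..b, u r) : u a ≤ c * Real.exp (C * (b - a)) := by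
  let G (s : ℝ) : ℝ := c + C * ∫ r in s..b, u r
  have continuousOn_G : ContinuousOn G (Icc a b) := by
    rw [← uIcc_of_le hab] at hu ⊢
    exact continuousOn_const.add <| continuousOn_const.mul <|
      intervalIntegral.continuousOn_primitive_interval_left (hu.integrableOn_compact isCompact_uIcc)
  have hasDerivAt_G {s : ℝ} (hs : s ∈ Ioo a b) : HasDerivAt G (C * -u s) s := by
    have intervalIntegrable_u : IntervalIntegrable u volume s b :=
      (hu.mono (Icc_subset_Icc_left hs.1.le)).intervalIntegrable_of_Icc hs.2.le
    refine ((intervalIntegral.integral_hasDerivAt_left intervalIntegrable_u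
      ((hu.mono Ioo_subset_Icc_self).stronglyMeasurableAtFilter isOpen_Ioo s hs)
      (hu.continuousAt (Icc_mem_nhds hs.1 hs.2))).const_mul C).const_add c
  have hasDerivAt_exp_mul_G {s : ℝ} (hs : s ∈ Ioo a b) :
      HasDerivAt (fun s ↦ Real.exp (C * s) * G s) (Real.exp (C * s) * (C * (G s - u s))) s := by
    refine ((((hasDerivAt_id s).const_mul C).exp).mul (hasDerivAt_G hs)).congr_deriv ?_
    simp only [id_eq]
    ring
  have monotoneOn_exp_mul_G : MonotoneOn (fun s ↦ Real.exp (C * s) * G s) (Icc a b) := by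
    refine monotoneOn_of_hasDerivWithinAt_nonneg (convex_Icc a b) (by fun_prop)
      (f' := fun s ↦ Real.exp (C * s) * (C * (G s - u s))) ?_ ?_ <;> rw [interior_Icc]
    · exact fun s hs ↦ (hasDerivAt_exp_mul_G hs).hasDerivWithinAt
    · exact fun s hs ↦ mul_nonneg (Real.exp_pos _).le
        (mul_nonneg hC (sub_nonneg.2 (hle s (Ioo_subset_Icc_self hs))))
  have G_b : G b = c := by simp [G]
  calc u a ≤ G a := hle a (left_mem_Icc.2 hab)
    _ = Real.exp (-(C * a)) * (Real.exp (C * a) * G a) := by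
        rw [← mul_assoc, ← Real.exp_add, neg_add_cancel, Real.exp_zero, one_mul]
    _ ≤ Real.exp (-(C * a)) * (Real.exp (C * b) * G b) :=
        mul_le_mul_of_nonneg_left
          (monotoneOn_exp_mul_G (left_mem_Icc.2 hab) (right_mem_Icc.2 hab) hab) (Real.exp_pos _).le
    _ = c * Real.exp (C * (b - a)) := by
        rw [G_b, ← mul_assoc, ← Real.exp_add, mul_comm]
        ring_nf

lemma exp_neg_le_one_sub_add_sq {a : ℝ} (ha : 0 ≤ a) : Real.exp (-a) ≤ 1 - a + a ^ 2 := by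
  rw [Real.exp_neg, inv_le_iff_one_le_mul₀ (Real.exp_pos a)]
  calc (1 : ℝ) ≤ 1 + a ^ 3 := by linarith [pow_nonneg ha 3]
    _ = (1 - a + a ^ 2) * (a + 1) := by ring
    _ ≤ (1 - a + a ^ 2) * Real.exp a := by
        gcongr
        · nlinarith [sq_nonneg (a - 1)]
        · exact Real.add_one_le_exp a

namespace IsBranchingMechanism

variable {φ : ℝ → ℝ} {β σ : ℝ} {m : Measure ℝ}

lemma integrable_min_one_sq (hφ : IsBranchingMechanism φ β σ m) :
    Integrable (fun z ↦ min 1 (z ^ 2)) m := by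
  refine ⟨by fun_prop, ?_⟩
  rw [hasFiniteIntegral_iff_ofReal (.of_forall fun z ↦ by positivity)]
  exact hφ.levy_finite

lemma le_quadratic (hφ : IsBranchingMechanism φ β σ m) {l : ℝ} (hl : 0 ≤ l) :
    φ l ≤ β * l + (σ ^ 2 / 2 + ∫ z, min 1 (z ^ 2) ∂m) * l ^ 2 := by
  let k (z : ℝ) : ℝ := Real.exp (-(z * l)) - 1 + if z ≤ 1 then z * l else 0
  have k_le {z : ℝ} (hz : 0 < z) : k z ≤ min 1 (z ^ 2) * l ^ 2 := by
    have hzl : 0 ≤ z * l := mul_nonneg hz.le hl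
    rcases le_or_gt z 1 with hz1 | hz1
    · simp only [k, if_pos hz1, min_eq_right (pow_le_one₀ hz.le hz1)]
      linarith [exp_neg_le_one_sub_add_sq hzl, mul_pow z l 2]
    · simp only [k, if_neg hz1.not_ge, min_eq_left (one_le_pow₀ hz1.le)]
      linarith [Real.exp_le_one_iff.2 (neg_nonpos.2 hzl), sq_nonneg l]
  have integral_k_le : ∫ z, k z ∂m ≤ (∫ z, min 1 (z ^ 2) ∂m) * l ^ 2 := by
    by_cases hk : Integrable k m
    · rw [← integral_mul_const]
      refine integral_mono_ae hk (hφ.integrable_min_one_sq.mul_const _) ?_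
      filter_upwards [measure_eq_zero_iff_ae_notMem.1 hφ.carrier] with z hz
      exact k_le (not_le.1 hz)
    · rw [integral_undef hk]
      exact mul_nonneg (integral_nonneg fun z ↦ by positivity) (sq_nonneg l)
  rw [hφ.form l hl]
  linarith

lemma exists_forall_le_mul (hφ : IsBranchingMechanism φ β σ m) (M : ℝ) :
    ∃ C, 0 ≤ C ∧ ∀ l ∈ Icc 0 M, φ l ≤ C * l := by
  let A : ℝ := σ ^ 2 / 2 + ∫ z, min 1 (z ^ 2) ∂m
  have hA : 0 ≤ A := add_nonneg (by positivity) (integral_nonneg fun z ↦ by positivity)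
  refine ⟨|β| + A * |M|, add_nonneg (abs_nonneg β) (mul_nonneg hA (abs_nonneg M)),
    fun l ⟨hl, hlM⟩ ↦ ?_⟩
  calc φ l ≤ β * l + A * l ^ 2 := hφ.le_quadratic hl
    _ = (β + A * l) * l := by ring
    _ ≤ (|β| + A * |M|) * l := by
        gcongr
        · exact le_abs_self β
        · exact hlM.trans (le_abs_self M)

end IsBranchingMechanism

namespace IsCumulant

variable {φ : ℝ → ℝ} {v : ℝ → ℝ → ℝ} {l t : ℝ}

lemma continuousOn (hv : IsCumulant φ v) (hl : 0 ≤ l) (ht : 0 ≤ t)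
    (hint : IntervalIntegrable (fun s ↦ φ (v s l)) volume 0 t) :
    ContinuousOn (fun s ↦ v s l) (Icc 0 t) := by
  have := intervalIntegral.continuousOn_primitive_interval' hint left_mem_uIcc
  rw [uIcc_of_le ht] at this
  exact (continuousOn_const.sub this).congr fun s hs ↦ (hv l hl s hs.1).2

lemma le_mul_exp (hv : IsCumulant φ v) (hl : 0 ≤ l) (ht : 0 ≤ t)
    (hint : IntervalIntegrable (fun s ↦ φ (v s l)) volume 0 t) {C : ℝ} (hC : 0 ≤ C)
    (hle : ∀ s ∈ Icc 0 t, φ (v s l) ≤ C * v s l) : l ≤ v t l * Real.exp (C * t) := by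
  have continuousOn_v := hv.continuousOn hl ht hint
  have v_zero : v 0 l = l := by simp [(hv l hl 0 le_rfl).2]
  have v_le (s : ℝ) (hs : s ∈ Icc 0 t) : v s l ≤ v t l + C * ∫ r in s..t, v r l := by
    have hst : Icc s t ⊆ Icc 0 t := Icc_subset_Icc_left hs.1
    have hint_left : IntervalIntegrable (fun s ↦ φ (v s l)) volume 0 s :=
      hint.mono_set (by simpa [uIcc_of_le, hs.1, ht] using Icc_subset_Icc_right hs.2)
    have hint_right : IntervalIntegrable (fun s ↦ φ (v s l)) volume s t :=
      hint.mono_set (by simpa [uIcc_of_le, hs.2, ht] using hst)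
    calc v s l = v t l + ∫ r in s..t, φ (v r l) := by
          rw [(hv l hl s hs.1).2, (hv l hl t ht).2,
            ← intervalIntegral.integral_add_adjacent_intervals hint_left hint_right]
          ring
      _ ≤ v t l + ∫ r in s..t, C * v r l := by
          gcongr
          exact intervalIntegral.integral_mono_on hs.2 hint_right
            ((continuousOn_const.mul (continuousOn_v.mono hst)).intervalIntegrable_of_Icc hs.2)
            fun r hr ↦ hle r (hst hr)
      _ = v t l + C * ∫ r in s..t, v r l := by rw [intervalIntegral.integral_const_mul]
  simpa only [v_zero, sub_zero] using
    le_mul_exp_of_le_add_mul_integral ht hC continuousOn_v v_le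

lemma pos (hv : IsCumulant φ v) {β σ : ℝ} {m : Measure ℝ} (hφ : IsBranchingMechanism φ β σ m)
    (ht : 0 ≤ t) (hl : 0 < l) : 0 < v t l := by
  by_cases hint : IntervalIntegrable (fun s ↦ φ (v s l)) volume 0 t
  · have continuousOn_v := hv.continuousOn hl.le ht hint
    obtain ⟨M, hM⟩ := (isCompact_Icc.image_of_continuousOn continuousOn_v).bddAbove
    obtain ⟨C, hC, hφC⟩ := hφ.exists_forall_le_mul M
    have l_le := hv.le_mul_exp hl.le ht hint hC fun s hs ↦
      hφC _ ⟨(hv l hl.le s hs.1).1, hM (mem_image_of_mem _ hs)⟩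
    exact pos_of_mul_pos_left (hl.trans_le l_le) (Real.exp_pos _).le
  · rwa [(hv l hl.le t ht).2, intervalIntegral.integral_undef hint, sub_zero]

end IsCumulant

end Cumulant

lemma lintegral_lt_top_of_ae_le_const_mul {α : Type*} [MeasurableSpace α] {μ : Measure α}
    {g h : α → ℝ≥0∞} {C : ℝ≥0∞} (hC : C ≠ ⊤) (hle : ∀ᵐ x ∂μ, g x ≤ C * h x)
    (hh : ∫⁻ x, h x ∂μ < ⊤) : ∫⁻ x, g x ∂μ < ⊤ :=
  calc ∫⁻ x, g x ∂μ ≤ ∫⁻ x, C * h x ∂μ := lintegral_mono_ae hle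
    _ = C * ∫⁻ x, h x ∂μ := lintegral_const_mul' _ _ hC
    _ < ⊤ := ENNReal.mul_lt_top hC.lt_top hh

theorem cb_f_moment_iff_initial_general {f : ℝ → ℝ} {K : ℝ} (hf : ConditionB f K)
    {q : ℝ → Measure ℝ} {w : ℝ → ℝ} (hq : HasLaplaceExponent q w) {l : ℝ} (hl : 0 < l)
    (hwl : 0 < w l) {x₀ : ℝ} (hx₀ : 0 < x₀) (hfin : ∫⁻ z, ENNReal.ofReal (f z) ∂(q x₀) < ⊤)
    {μ : Measure ℝ} (hμ : ∀ᵐ x ∂μ, 0 ≤ x) :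
    ∫⁻ x, ∫⁻ y, ENNReal.ofReal (f y) ∂(q x) ∂μ < ⊤ ↔ ∫⁻ x, ENNReal.ofReal (f x) ∂μ < ⊤ := by
  obtain ⟨C, hC, lower⟩ := hf.exists_le_mul_lintegral hq hl hwl
  obtain ⟨C', hC', upper⟩ := hf.exists_lintegral_le_mul hq hx₀ hfin
  exact ⟨lintegral_lt_top_of_ae_le_const_mul hC (hμ.mono lower),
    lintegral_lt_top_of_ae_le_const_mul hC' (hμ.mono upper)⟩

/-- Proposition 3.6: fix `t ≥ 0` and suppose `∫ f dQ_t(x₀,·) < ∞` for some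
`x₀ > 0`. Then for a CB-process with arbitrary initial law `μ`, the `f`-moment
at time `t` is finite iff the `f`-moment of `μ` is finite. -/
theorem cb_f_moment_iff_initial
    (f : ℝ → ℝ) (K : ℝ) (hf : ConditionB f K)
    (φ : ℝ → ℝ) (β σ : ℝ) (m : Measure ℝ)
    (hφ : IsBranchingMechanism φ β σ m) (hGrey : GreyCondition φ)
    (v : ℝ → ℝ → ℝ) (hv : IsCumulant φ v)
    (Q : ℝ → ℝ → Measure ℝ) (hQ : IsCBSemigroup v Q)
    (t : ℝ) (ht : 0 ≤ t) (x₀ : ℝ) (hx₀ : 0 < x₀)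
    (hfin : (∫⁻ z, ENNReal.ofReal (f z) ∂(Q t x₀)) < ⊤)
    (μ : Measure ℝ) (hμ : IsProbabilityMeasure μ) (hμ0 : μ (Set.Iio 0) = 0) :
    (∫⁻ x, (∫⁻ y, ENNReal.ofReal (f y) ∂(Q t x)) ∂μ) < ⊤ ↔
      (∫⁻ x, ENNReal.ofReal (f x) ∂μ) < ⊤ := by
  exact cb_f_moment_iff_initial_general hf (hQ.hasLaplaceExponent ht) one_pos
    (hv.pos hφ ht one_pos) hx₀ hfin (ae_nonneg_of_measure_Iio_eq_zero hμ0)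
end
end

section
/- Let f satisfy Condition B with constant K, let φ be a branching mechanism satisfying Grey's condition whose Lévy measure m satisfies ∫_{(1,∞)} zⁿ m(dz) < ∞ for every integer n ≥ 1, and let (Q_t)_{t≥0} be the transition semigroup of the CB-process with branching mechanism φ. Then for every x > 0, the function t ↦ ∫_{[0,∞)} f(z) Q_t(x,dz) is finite for every t ≥ 0 and locally bounded on [0,∞) (i.e., bounded on every compact interval [0,T]). -/
open MeasureTheory Set Filter

noncomputable section

/-!
Write `φ(λ) = bλ + r(λ)` with `r ≥ 0` of order `λ²`. Since `m` has finite moments, `r(λ) / λ²` has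
a polynomial expansion at `0+` of every order. By variation of constants the ratio
`w_t(λ) = v_t(λ) / λ` is bounded on `[0, T]` and solves
`w_t = e^{-bt} - λ ∫₀ᵗ e^{-b(t - s)} λ⁻² r(λ w_s) ds`; the factor `λ` turns an expansion of `w` of
order `n`, uniform in `t`, into one of order `n + 1`. Hence the Laplace transform
`e^{-x v_t(λ)} = e^{-x λ w_t(λ)}` has uniform expansions of all orders, and its `n`-th forward
difference with step `λ` at `λ` is `O(λⁿ)`. This difference is, up to sign,
`∫ e^{-λz} (1 - e^{-λz})ⁿ Q_t(x, dz)`, so Fatou's lemma bounds the `n`-th moment of `Q_t(x, ·)`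
uniformly in `t ≤ T`. Finally, iterating `f(2y) ≤ K f(2) f(y)` shows that `f` grows at most
polynomially.
-/

open Asymptotics Polynomial ENNReal Topology fwdDiff

section Expansion

variable {A : Type*} [NormedCommRing A] [NormedAlgebra ℝ A] {F G : ℝ → A} {n : ℕ}

/-- `F l = a₀ + a₁ l + ⋯ + aₖ lᵏ + O(lⁿ)` as `l → 0+`, with coefficients in the normed algebra `A`.
For `A = C([0, T], ℝ)` this is a Taylor expansion that is uniform in time. The degree `k` is not
bounded by `n`, so that expansions are multiplied without truncation. -/
def HasExpansion (n : ℕ) (F : ℝ → A) : Prop :=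
  ∃ p : A[X], (fun l ↦ F l - p.eval (algebraMap ℝ A l)) =O[𝓝[>] 0] fun l ↦ l ^ n

lemma eval_algebraMap_isBigO_one (p : A[X]) :
    (fun l : ℝ ↦ p.eval (algebraMap ℝ A l)) =O[𝓝[>] 0] fun _ ↦ (1 : ℝ) :=
  ((p.continuous.comp (algebraMapCLM ℝ A).continuous).continuousAt.tendsto.isBigO_one ℝ).mono
    nhdsWithin_le_nhds

lemma pow_isBigO_pow_nhdsGT_zero {m n : ℕ} (h : m ≤ n) :
    (fun l : ℝ ↦ l ^ n) =O[𝓝[>] 0] fun l ↦ l ^ m := by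
  obtain rfl | hlt := h.eq_or_lt
  · exact isBigO_refl _ _
  · exact (isLittleO_pow_pow hlt).isBigO.mono nhdsWithin_le_nhds

lemma exists_eval_algebraMap_eq_clm {B : Type*} [NormedCommRing B] [NormedAlgebra ℝ B]
    (L : A →L[ℝ] B) (p : A[X]) :
    ∃ q : B[X], ∀ l : ℝ, q.eval (algebraMap ℝ B l) = L (p.eval (algebraMap ℝ A l)) := by
  induction p using Polynomial.induction_on' with
  | add p₁ p₂ h₁ h₂ =>
    obtain ⟨q₁, hq₁⟩ := h₁
    obtain ⟨q₂, hq₂⟩ := h₂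
    exact ⟨q₁ + q₂, fun l ↦ by rw [eval_add, eval_add, map_add, hq₁, hq₂]⟩
  | monomial k a =>
    refine ⟨monomial k (L a), fun l ↦ ?_⟩
    simp only [eval_monomial, ← map_pow, mul_comm _ (algebraMap ℝ _ _), ← Algebra.smul_def,
      map_smul]

namespace HasExpansion

lemma of_isBigO (hF : F =O[𝓝[>] 0] fun l ↦ l ^ n) : HasExpansion n F :=
  ⟨0, by simpa using hF⟩

lemma const (a : A) : HasExpansion n fun _ ↦ a :=
  ⟨C a, by simpa using isBigO_zero _ _⟩

lemma mono {m : ℕ} (hF : HasExpansion n F) (h : m ≤ n) : HasExpansion m F :=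
  hF.imp fun _ hp ↦ hp.trans (pow_isBigO_pow_nhdsGT_zero h)

lemma congr (hF : HasExpansion n F) (h : F =ᶠ[𝓝[>] 0] G) : HasExpansion n G :=
  hF.imp fun _ hp ↦ hp.congr' (h.mono fun _ hl ↦ by simp only [hl]) .rfl

lemma isBigO_one (hF : HasExpansion n F) : F =O[𝓝[>] 0] fun _ ↦ (1 : ℝ) := by
  obtain ⟨p, hp⟩ := hF
  have h := hp.trans (pow_isBigO_pow_nhdsGT_zero n.zero_le)
  simp only [pow_zero] at h
  exact (h.add (eval_algebraMap_isBigO_one p)).congr_left fun l ↦ sub_add_cancel _ _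

lemma add (hF : HasExpansion n F) (hG : HasExpansion n G) :
    HasExpansion n fun l ↦ F l + G l := by
  obtain ⟨p, hp⟩ := hF
  obtain ⟨q, hq⟩ := hG
  exact ⟨p + q, (hp.add hq).congr_left fun l ↦ by rw [eval_add]; ring⟩

lemma mul (hF : HasExpansion n F) (hG : HasExpansion n G) :
    HasExpansion n fun l ↦ F l * G l := by
  obtain ⟨p, hp⟩ := hF
  have hG₁ := hG.isBigO_one
  obtain ⟨q, hq⟩ := hG
  have h₁ := hp.mul hG₁
  have h₂ := (eval_algebraMap_isBigO_one p).mul hq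
  simp only [mul_one, one_mul] at h₁ h₂
  exact ⟨p * q, (h₁.add h₂).congr_left fun l ↦ by rw [eval_mul]; ring⟩

lemma id_smul (hF : HasExpansion n F) : HasExpansion (n + 1) fun l ↦ l • F l := by
  obtain ⟨p, hp⟩ := hF
  refine ⟨X * p, (((isBigO_refl id _).smul hp).congr_left fun l ↦ ?_).congr_right fun l ↦ ?_⟩
  · simp only [eval_mul, eval_X, id, Algebra.smul_def, mul_sub]
  · simp only [id, smul_eq_mul, pow_succ']

lemma aeval (hF : HasExpansion n F) (P : ℝ[X]) :
    HasExpansion n fun l ↦ Polynomial.aeval (F l) P := by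
  induction P using Polynomial.induction_on with
  | C a => simpa only [aeval_C] using const _
  | add P Q hP hQ => simpa only [map_add] using hP.add hQ
  | monomial k a ih => simpa only [map_mul, pow_succ, ← mul_assoc, aeval_X] using ih.mul hF

lemma pow (hF : HasExpansion n F) (k : ℕ) : HasExpansion n fun l ↦ F l ^ k := by
  simpa only [map_pow, aeval_X] using hF.aeval (X ^ k)

lemma clm_apply {B : Type*} [NormedCommRing B] [NormedAlgebra ℝ B] (L : A →L[ℝ] B)
    (hF : HasExpansion n F) : HasExpansion n fun l ↦ L (F l) := by
  obtain ⟨p, hp⟩ := hF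
  obtain ⟨q, hq⟩ := exists_eval_algebraMap_eq_clm L p
  exact ⟨q, ((L.isBigO_comp _ _).trans hp).congr_left fun l ↦ by rw [map_sub, hq]⟩

lemma of_comp {S : Type*} [TopologicalSpace S] [CompactSpace S] {d : ℕ} {r : ℝ → ℝ} {P : ℝ[X]}
    (hr : (fun y ↦ r y - y ^ d * P.eval y) =O[𝓟 (Ici 0)] fun y ↦ y ^ (n + d))
    {w H : ℝ → C(S, ℝ)} (hw : HasExpansion n w) (hw₀ : ∀ l, 0 < l → 0 ≤ w l)
    (hH : ∀ l, 0 < l → ∀ s, l ^ d * H l s = r (l * w l s)) : HasExpansion n H := by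
  have hmain : HasExpansion n fun l ↦ w l ^ d * Polynomial.aeval (l • w l) P :=
    (hw.pow d).mul ((hw.id_smul.mono n.le_succ).aeval P)
  suffices hrem : HasExpansion n fun l ↦ H l - w l ^ d * Polynomial.aeval (l • w l) P from
    (hrem.add hmain).congr (.of_forall fun l ↦ sub_add_cancel _ _)
  obtain ⟨c, hc₀, hc⟩ := hr.exists_nonneg
  obtain ⟨b, hb₀, hb⟩ := hw.isBigO_one.exists_nonneg
  refine .of_isBigO (.of_bound (c * b ^ (n + d)) ?_)
  filter_upwards [hb.bound, self_mem_nhdsWithin] with l hbl (hl : 0 < l)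
  refine (ContinuousMap.norm_le _ (by positivity)).mpr fun s ↦ ?_
  have hy₀ : 0 ≤ l * w l s := mul_nonneg hl.le (hw₀ l hl s)
  have hyb : l * w l s ≤ l * b := by
    have hws : w l s ≤ b := by simpa using ((w l).apply_le_norm s).trans hbl
    gcongr
  have hscaled : l ^ d * (H l - w l ^ d * Polynomial.aeval (l • w l) P) s =
      r (l * w l s) - (l * w l s) ^ d * P.eval (l * w l s) := by
    simp only [ContinuousMap.sub_apply, ContinuousMap.mul_apply, ContinuousMap.pow_apply,
      aeval_continuousMap_apply, ContinuousMap.smul_apply, smul_eq_mul, mul_sub, hH l hl]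
    ring
  refine le_of_mul_le_mul_left ?_ (pow_pos hl d)
  calc l ^ d * ‖(H l - w l ^ d * Polynomial.aeval (l • w l) P) s‖
      = ‖l ^ d * (H l - w l ^ d * Polynomial.aeval (l • w l) P) s‖ := by
        rw [norm_mul, Real.norm_of_nonneg (pow_nonneg hl.le d)]
    _ ≤ c * ‖(l * w l s) ^ (n + d)‖ := by
        rw [hscaled]
        exact isBigOWith_principal.mp hc _ hy₀
    _ ≤ c * (l * b) ^ (n + d) := by
        rw [Real.norm_of_nonneg (pow_nonneg hy₀ _)]
        gcongr
    _ = l ^ d * (c * b ^ (n + d) * ‖l ^ n‖) := by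
        rw [Real.norm_of_nonneg (pow_nonneg hl.le n)]
        ring

end HasExpansion

end Expansion

section ExponentialTaylor

lemma exp_neg_sub_sum_isBigO (n : ℕ) :
    (fun u : ℝ ↦ Real.exp (-u) - ∑ i ∈ Finset.range n, (-u) ^ i / i.factorial)
      =O[𝓟 (Ici 0)] fun u ↦ u ^ n := by
  obtain rfl | hn := n.eq_zero_or_pos
  · refine .of_bound 1 (eventually_principal.mpr fun u (hu : 0 ≤ u) ↦ ?_)
    simpa using hu
  rw [← Icc_union_Ici_eq_Ici zero_le_one, ← sup_principal, isBigO_sup]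
  constructor
  · refine .of_bound (n.succ / (n.factorial * n)) (eventually_principal.mpr fun u hu ↦ ?_)
    have hu₁ : |-u| ≤ 1 := by rw [abs_neg, abs_of_nonneg hu.1]; exact hu.2
    simpa only [abs_neg, Real.norm_eq_abs, abs_pow, mul_comm] using Real.exp_bound hu₁ hn
  · have hexp : (fun u : ℝ ↦ Real.exp (-u)) =O[𝓟 (Ici 1)] fun u ↦ u ^ n := by
      refine .of_bound 1 (eventually_principal.mpr fun u (hu : 1 ≤ u) ↦ ?_)
      have hle : Real.exp (-u) ≤ 1 := Real.exp_le_one_iff.mpr (by linarith)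
      simpa using hle.trans ((one_le_pow₀ hu).trans (le_abs_self _))
    have hterm : ∀ i ∈ Finset.range n,
        (fun u : ℝ ↦ (-u) ^ i / (i.factorial : ℝ)) =O[𝓟 (Ici 1)] fun u ↦ u ^ n := by
      refine fun i hi ↦ .of_bound 1 (eventually_principal.mpr fun u (hu : 1 ≤ u) ↦ ?_)
      have hpow : |u| ^ i ≤ |u| ^ n :=
        pow_le_pow_right₀ (hu.trans (le_abs_self u)) (Finset.mem_range.mp hi).le
      have hfact : (1 : ℝ) ≤ i.factorial := mod_cast i.factorial_pos
      simpa using (div_le_self (by positivity) hfact).trans hpow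
    exact hexp.sub (.fun_sum hterm)

lemma exists_polynomial_exp_neg_isBigO (n : ℕ) :
    ∃ P : ℝ[X], (fun u ↦ Real.exp (-u) - P.eval u) =O[𝓟 (Ici 0)] fun u ↦ u ^ n := by
  refine ⟨∑ i ∈ Finset.range n, C ((-1) ^ i / (i.factorial : ℝ)) * X ^ i,
    (exp_neg_sub_sum_isBigO n).congr_left fun u ↦ ?_⟩
  simp only [eval_finsetSum, eval_mul, eval_C, eval_pow, eval_X]
  congr! 2 with i
  rw [neg_pow]
  ring

lemma HasExpansion.exp_neg {S : Type*} [TopologicalSpace S] [CompactSpace S] {n : ℕ}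
    {w F : ℝ → C(S, ℝ)} (hw : HasExpansion n w) (hw₀ : ∀ l, 0 < l → 0 ≤ w l)
    (hF : ∀ l, 0 < l → ∀ s, F l s = Real.exp (-(l * w l s))) : HasExpansion n F := by
  obtain ⟨P, hP⟩ := exists_polynomial_exp_neg_isBigO n
  refine HasExpansion.of_comp (d := 0) (by simpa using hP) hw hw₀ ?_
  simpa only [pow_zero, one_mul] using hF

/-- The integrand of a Lévy–Khintchine exponent compensated by the full first moment, so that
`compensatedExp u = u² / 2 + O(u³)`. -/
def compensatedExp (u : ℝ) : ℝ := Real.exp (-u) - 1 + u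

lemma compensatedExp_nonneg (u : ℝ) : 0 ≤ compensatedExp u := by
  have := Real.add_one_le_exp (-u)
  unfold compensatedExp
  linarith

lemma continuous_compensatedExp : Continuous compensatedExp := by
  unfold compensatedExp
  fun_prop

lemma compensatedExp_isBigO_sq : compensatedExp =O[𝓟 (Ici 0)] fun u ↦ u ^ 2 := by
  refine (exp_neg_sub_sum_isBigO 2).congr_left fun u ↦ ?_
  simp only [compensatedExp, Finset.sum_range_succ]
  norm_num
  ring

lemma exists_polynomial_compensatedExp_isBigO (n : ℕ) :
    ∃ P : ℝ[X], (fun u ↦ compensatedExp u - u ^ 2 * P.eval u)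
      =O[𝓟 (Ici 0)] fun u ↦ u ^ (n + 2) := by
  refine ⟨∑ i ∈ Finset.range n, C ((-1) ^ i / ((i + 2).factorial : ℝ)) * X ^ i,
    (exp_neg_sub_sum_isBigO (n + 2)).congr_left fun u ↦ ?_⟩
  have hsum : ∑ i ∈ Finset.range n, (-u) ^ (i + 2) / ((i + 2).factorial : ℝ) =
      u ^ 2 * ∑ i ∈ Finset.range n, (-1) ^ i / ((i + 2).factorial : ℝ) * u ^ i := by
    rw [Finset.mul_sum]
    congr! 1 with i
    rw [neg_pow]
    ring
  simp only [eval_finsetSum, eval_mul, eval_C, eval_pow, eval_X, compensatedExp,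
    Finset.sum_range_succ', add_assoc, ← hsum]
  norm_num
  ring

end ExponentialTaylor

section LevyIntegral

variable {m : Measure ℝ}

lemma exists_polynomial_integral_comp_mul_isBigO {g : ℝ → ℝ} {P : ℝ[X]} {d n : ℕ}
    (hg : (fun u ↦ g u - u ^ d * P.eval u) =O[𝓟 (Ici 0)] fun u ↦ u ^ (n + d))
    (hm₀ : ∀ᵐ z ∂m, 0 ≤ z) (hmom : ∀ k, Integrable (fun z ↦ z ^ (k + d)) m)
    (hint : ∀ l, 0 ≤ l → Integrable (fun z ↦ g (z * l)) m) :
    ∃ R : ℝ[X], (fun l ↦ ∫ z, g (z * l) ∂m - l ^ d * R.eval l)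
      =O[𝓟 (Ici 0)] fun l ↦ l ^ (n + d) := by
  obtain ⟨c, hc⟩ := isBigO_principal.mp hg
  let R : ℝ[X] := ∑ i ∈ P.support, monomial i (P.coeff i * ∫ z, z ^ (i + d) ∂m)
  have hterm (l : ℝ) (i : ℕ) :
      Integrable (fun z ↦ l ^ d * (P.coeff i * z ^ (i + d) * l ^ i)) m :=
    (((hmom i).const_mul _).mul_const _).const_mul _
  have hpoly (l z : ℝ) : (z * l) ^ d * P.eval (z * l) =
      ∑ i ∈ P.support, l ^ d * (P.coeff i * z ^ (i + d) * l ^ i) := by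
    rw [eval_eq_sum, Polynomial.sum, Finset.mul_sum]
    exact Finset.sum_congr rfl fun i _ ↦ by ring
  have hR (l : ℝ) (hl : 0 ≤ l) : ∫ z, g (z * l) ∂m - l ^ d * R.eval l =
      ∫ z, (g (z * l) - (z * l) ^ d * P.eval (z * l)) ∂m := by
    simp only [hpoly]
    rw [integral_sub (hint l hl) (integrable_finsetSum _ fun i _ ↦ hterm l i),
      integral_finsetSum _ fun i _ ↦ hterm l i]
    simp only [R, integral_const_mul, integral_mul_const, eval_finsetSum, eval_monomial,
      Finset.mul_sum]
  refine ⟨R, .of_bound (c * ∫ z, z ^ (n + d) ∂m) (eventually_principal.mpr fun l hl ↦ ?_)⟩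
  rw [hR l hl, mul_right_comm, ← integral_const_mul]
  refine norm_integral_le_of_norm_le ((hmom n).const_mul _) ?_
  filter_upwards [hm₀] with z hz
  refine (hc _ (mul_nonneg hz hl)).trans_eq ?_
  rw [mul_pow, norm_mul, Real.norm_of_nonneg (pow_nonneg hz _)]
  ring

lemma integrable_compensatedExp_mul (hm₀ : ∀ᵐ z ∂m, 0 ≤ z)
    (hm₂ : Integrable (fun z ↦ z ^ 2) m) {l : ℝ} (hl : 0 ≤ l) :
    Integrable (fun z ↦ compensatedExp (z * l)) m := by
  obtain ⟨c, hc⟩ := isBigO_principal.mp compensatedExp_isBigO_sq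
  refine (hm₂.const_mul (c * l ^ 2)).mono'
    (continuous_compensatedExp.comp (continuous_mul_const l)).aestronglyMeasurable ?_
  filter_upwards [hm₀] with z hz
  refine (hc _ (mul_nonneg hz hl)).trans_eq ?_
  rw [Real.norm_of_nonneg (sq_nonneg _)]
  ring

lemma continuousOn_integral_compensatedExp_mul (hm₀ : ∀ᵐ z ∂m, 0 ≤ z)
    (hm₂ : Integrable (fun z ↦ z ^ 2) m) :
    ContinuousOn (fun l ↦ ∫ z, compensatedExp (z * l) ∂m) (Ici 0) := by
  obtain ⟨c, hc₀, hc⟩ := compensatedExp_isBigO_sq.exists_nonneg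
  intro l _
  refine continuousWithinAt_of_dominated (bound := fun z ↦ c * (l + 1) ^ 2 * z ^ 2)
    (.of_forall fun y ↦ ?_) ?_ (hm₂.const_mul _) (.of_forall fun z ↦ ?_)
  · exact (continuous_compensatedExp.comp (continuous_mul_const y)).aestronglyMeasurable
  · filter_upwards [self_mem_nhdsWithin, mem_nhdsWithin_of_mem_nhds (Iio_mem_nhds (lt_add_one l))]
      with y (hy : 0 ≤ y) (hyl : y < l + 1)
    filter_upwards [hm₀] with z hz
    calc ‖compensatedExp (z * y)‖ ≤ c * ‖(z * y) ^ 2‖ :=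
          isBigOWith_principal.mp hc _ (mul_nonneg hz hy)
      _ = c * y ^ 2 * z ^ 2 := by rw [Real.norm_of_nonneg (sq_nonneg _)]; ring
      _ ≤ c * (l + 1) ^ 2 * z ^ 2 := by gcongr
  · exact (continuous_compensatedExp.comp (continuous_const_mul z)).continuousWithinAt

lemma integrableOn_pow_Ioi_one {n : ℕ} (hm : ∫⁻ z in Ioi 1, ENNReal.ofReal (z ^ n) ∂m < ⊤) :
    IntegrableOn (fun z ↦ z ^ n) (Ioi 1) m := by
  refine ⟨by fun_prop, ?_⟩
  rwa [hasFiniteIntegral_iff_ofReal]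
  filter_upwards [ae_restrict_mem measurableSet_Ioi] with z (hz : 1 < z)
  exact pow_nonneg (zero_le_one.trans hz.le) n

end LevyIntegral

/-- The derivative at `0` of the branching mechanism `βλ + ⋯` with Lévy measure `m`: the drift `β`
once the jumps larger than `1` are compensated as well. -/
def linearCoeff (β : ℝ) (m : Measure ℝ) : ℝ := β - ∫ z in Ioi 1, z ∂m

/-- A branching mechanism with diffusion coefficient `σ` and Lévy measure `m`, minus its linear
part at `0`. -/
def nonlinearPart (σ : ℝ) (m : Measure ℝ) (l : ℝ) : ℝ :=
  σ ^ 2 * l ^ 2 / 2 + ∫ z, compensatedExp (z * l) ∂m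

section NonlinearPart

variable {σ : ℝ} {m : Measure ℝ}

lemma nonlinearPart_nonneg (l : ℝ) : 0 ≤ nonlinearPart σ m l :=
  add_nonneg (by positivity) (integral_nonneg fun _ ↦ compensatedExp_nonneg _)

lemma continuousOn_nonlinearPart (hm₀ : ∀ᵐ z ∂m, 0 ≤ z) (hm₂ : Integrable (fun z ↦ z ^ 2) m) :
    ContinuousOn (nonlinearPart σ m) (Ici 0) :=
  .add (by fun_prop) (continuousOn_integral_compensatedExp_mul hm₀ hm₂)

lemma exists_polynomial_nonlinearPart_isBigO (hm₀ : ∀ᵐ z ∂m, 0 ≤ z)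
    (hmom : ∀ k : ℕ, Integrable (fun z ↦ z ^ (k + 2)) m) (n : ℕ) :
    ∃ P : ℝ[X], (fun l ↦ nonlinearPart σ m l - l ^ 2 * P.eval l)
      =O[𝓟 (Ici 0)] fun l ↦ l ^ (n + 2) := by
  obtain ⟨P, hP⟩ := exists_polynomial_compensatedExp_isBigO n
  obtain ⟨R, hR⟩ := exists_polynomial_integral_comp_mul_isBigO hP hm₀ hmom
    fun l hl ↦ integrable_compensatedExp_mul hm₀ (hmom 0) hl
  refine ⟨C (σ ^ 2 / 2) + R, hR.congr_left fun l ↦ ?_⟩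
  simp only [nonlinearPart, eval_add, eval_C]
  ring

end NonlinearPart

namespace IsBranchingMechanism

variable {φ : ℝ → ℝ} {β σ : ℝ} {m : Measure ℝ}

lemma ae_pos (hφ : IsBranchingMechanism φ β σ m) : ∀ᵐ z ∂m, 0 < z := by
  simpa only [ae_iff, not_lt, Iic_def] using hφ.carrier

lemma integrable_pow (hφ : IsBranchingMechanism φ β σ m) {n : ℕ} (hn : 2 ≤ n)
    (hm : IntegrableOn (fun z ↦ z ^ n) (Ioi 1) m) : Integrable (fun z ↦ z ^ n) m := by
  have hmin : Integrable (fun z : ℝ ↦ min 1 (z ^ 2)) m := by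
    refine ⟨by fun_prop, ?_⟩
    rw [hasFiniteIntegral_iff_ofReal (.of_forall fun z ↦ by positivity)]
    exact hφ.levy_finite
  have hsmall : IntegrableOn (fun z ↦ z ^ n) (Iic 1) m := by
    refine hmin.integrableOn.mono' (by fun_prop) ?_
    filter_upwards [ae_restrict_mem measurableSet_Iic, ae_restrict_of_ae hφ.ae_pos]
      with z (hz₁ : z ≤ 1) hz₀
    rw [Real.norm_of_nonneg (by positivity), min_eq_right (pow_le_one₀ hz₀.le hz₁)]
    exact pow_le_pow_of_le_one hz₀.le hz₁ hn
  rw [← integrableOn_univ, ← Iic_union_Ioi (a := (1 : ℝ))]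
  exact hsmall.union hm

lemma eq_linear_add_nonlinearPart (hφ : IsBranchingMechanism φ β σ m)
    (hm₁ : IntegrableOn (fun z ↦ z) (Ioi 1) m) (hm₂ : Integrable (fun z ↦ z ^ 2) m)
    {l : ℝ} (hl : 0 ≤ l) : φ l = linearCoeff β m * l + nonlinearPart σ m l := by
  have hcomp (z : ℝ) : Real.exp (-(z * l)) - 1 + (if z ≤ 1 then z * l else 0) =
      compensatedExp (z * l) - (Ioi 1).indicator (fun z ↦ z) z * l := by
    by_cases hz : z ≤ 1
    · simp [compensatedExp, hz]
    · simp [compensatedExp, hz, not_le.mp hz]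
  simp only [hφ.form l hl, hcomp]
  rw [integral_sub (integrable_compensatedExp_mul (hφ.ae_pos.mono fun _ ↦ le_of_lt) hm₂ hl)
    ((hm₁.integrable_indicator measurableSet_Ioi).mul_const l), integral_mul_const,
    integral_indicator measurableSet_Ioi, linearCoeff, nonlinearPart]
  ring

end IsBranchingMechanism

section IntegralEquation

lemma intervalIntegrable_of_norm_le_of_eq_const {E : Type*} [NormedAddCommGroup E] {g : ℝ → E}
    {a b B : ℝ} {c : E} (hab : a ≤ b)
    (hB : ∀ t ∈ Icc a b, IntervalIntegrable g volume a t → ‖g t‖ ≤ B)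
    (hc : ∀ t ∈ Icc a b, ¬ IntervalIntegrable g volume a t → g t = c) :
    IntervalIntegrable g volume a b := by
  let I : Set ℝ := {t ∈ Icc a b | IntervalIntegrable g volume a t}
  have haI : a ∈ I := ⟨left_mem_Icc.mpr hab, .refl⟩
  have hI : BddAbove I := ⟨b, fun t ht ↦ ht.1.2⟩
  have hatop : a ≤ sSup I := le_csSup hI haI
  have htopb : sSup I ≤ b := csSup_le ⟨a, haI⟩ fun t ht ↦ ht.1.2
  have hB₀ : 0 ≤ B := (norm_nonneg _).trans (hB a haI.1 haI.2)
  have hbefore : IntervalIntegrable g volume a (sSup I) := by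
    obtain ⟨t, -, hlim, htI⟩ := exists_seq_tendsto_sSup ⟨a, haI⟩ hI
    rw [intervalIntegrable_iff_integrableOn_Ioc_of_le hatop]
    refine integrableOn_Ioc_of_intervalIntegral_norm_bounded_right (I := B * (b - a))
      (fun i ↦ (htI i).2.1) hlim (.of_forall fun i ↦ ?_)
    have hbound : ∀ s ∈ Ioc a (t i), ‖‖g s‖‖ ≤ B := fun s hs ↦ by
      rw [norm_norm]
      exact hB s ⟨hs.1.le, hs.2.trans (htI i).1.2⟩
        ((htI i).2.mono_set (uIcc_subset_uIcc_left (mem_uIcc_of_le hs.1.le hs.2)))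
    calc ∫ s in Ioc a (t i), ‖g s‖ ≤ B * volume.real (Ioc a (t i)) :=
          (Real.le_norm_self _).trans
            (norm_setIntegral_le_of_norm_le_const measure_Ioc_lt_top hbound)
      _ ≤ B * (b - a) := by
          rw [Real.volume_real_Ioc_of_le (htI i).1.1]
          gcongr
          exact (htI i).1.2
  have hafter : IntervalIntegrable g volume (sSup I) b := by
    refine (intervalIntegrable_const (c := c)).congr fun t ht ↦ ?_
    rw [uIoc_of_le htopb] at ht
    have ht' : t ∈ Icc a b := ⟨hatop.trans ht.1.le, ht.2⟩
    exact (hc t ht' fun h ↦ ht.1.not_ge (le_csSup hI ⟨ht', h⟩)).symm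
  exact hbefore.trans hafter

lemma continuousOn_of_eq_sub_integral {g u : ℝ → ℝ} {a b l : ℝ} (hab : a ≤ b)
    (hg : IntervalIntegrable g volume a b) (hu : ∀ t ∈ Icc a b, u t = l - ∫ s in a..t, g s) :
    ContinuousOn u (Icc a b) := by
  have hint := intervalIntegral.continuousOn_primitive_interval' hg left_mem_uIcc
  rw [uIcc_of_le hab] at hint
  exact (continuousOn_const.sub hint).congr hu

lemma hasDerivAt_of_eq_sub_integral {g u : ℝ → ℝ} {a b l : ℝ} (hg : ContinuousOn g (Icc a b))
    (hu : ∀ t ∈ Icc a b, u t = l - ∫ s in a..t, g s) {t : ℝ} (ht : t ∈ Ioo a b) :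
    HasDerivAt u (-g t) t := by
  have hnhds : Icc a b ∈ 𝓝 t := Icc_mem_nhds ht.1 ht.2
  have hint : IntervalIntegrable g volume a t :=
    (hg.mono (Icc_subset_Icc_right ht.2.le)).intervalIntegrable_of_Icc ht.1.le
  have hderiv : HasDerivAt (fun t ↦ ∫ s in a..t, g s) (g t) t :=
    intervalIntegral.integral_hasDerivAt_right hint
      ((hg.mono Ioo_subset_Icc_self).stronglyMeasurableAtFilter isOpen_Ioo t ht)
      (hg.continuousAt hnhds)
  exact (hderiv.const_sub l).congr_of_eventuallyEq (eventually_of_mem hnhds hu)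

lemma variation_of_constants {u ρ : ℝ → ℝ} {b l t : ℝ} (ht : 0 ≤ t)
    (hρ : ContinuousOn ρ (Icc 0 t)) (hu : ContinuousOn u (Icc 0 t))
    (heq : ∀ s ∈ Icc 0 t, u s = l - ∫ q in 0..s, (b * u q + ρ q)) :
    u t = Real.exp (-(b * t)) * (l - ∫ s in 0..t, Real.exp (b * s) * ρ s) := by
  have hexp : ContinuousOn (fun s ↦ Real.exp (b * s)) (Icc 0 t) := by fun_prop
  have hderiv : ∀ s ∈ Ioo 0 t,
      HasDerivAt (fun s ↦ Real.exp (b * s) * u s) (-(Real.exp (b * s) * ρ s)) s := fun s hs ↦ by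
    have hu' := hasDerivAt_of_eq_sub_integral ((continuousOn_const.mul hu).add hρ) heq hs
    have hexp' := ((hasDerivAt_id s).const_mul b).exp
    exact (hexp'.mul hu').congr_deriv (by simp only [id, Pi.add_apply, Pi.mul_apply]; ring)
  have hftc := intervalIntegral.integral_eq_sub_of_hasDerivAt_of_le ht (hexp.mul hu) hderiv
    ((hexp.mul hρ).neg.intervalIntegrable_of_Icc ht)
  have hu₀ : u 0 = l := by simpa using heq 0 (left_mem_Icc.mpr ht)
  simp only [Pi.mul_apply] at hftc
  rw [intervalIntegral.integral_neg, hu₀, mul_zero, Real.exp_zero, one_mul] at hftc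
  rw [eq_comm, sub_eq_add_neg, hftc, add_sub_cancel, ← mul_assoc, ← Real.exp_add,
    neg_add_cancel, Real.exp_zero, one_mul]

variable {φ r u : ℝ → ℝ} {b l t : ℝ}

lemma eq_exp_mul_sub_integral_of_eq_sub_integral (hφ : ∀ y, 0 ≤ y → φ y = b * y + r y)
    (hr : ContinuousOn r (Ici 0))
    (hu : ∀ s, 0 ≤ s → 0 ≤ u s ∧ u s = l - ∫ q in 0..s, φ (u q)) (ht : 0 ≤ t)
    (hint : IntervalIntegrable (fun s ↦ φ (u s)) volume 0 t) :
    u t = Real.exp (-(b * t)) * (l - ∫ s in 0..t, Real.exp (b * s) * r (u s)) := by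
  have hcont : ContinuousOn u (Icc 0 t) :=
    continuousOn_of_eq_sub_integral ht hint fun s hs ↦ (hu s hs.1).2
  refine variation_of_constants ht (hr.comp hcont fun s hs ↦ (hu s hs.1).1) hcont fun s hs ↦ ?_
  rw [(hu s hs.1).2]
  congr 1
  refine intervalIntegral.integral_congr fun q hq ↦ ?_
  rw [uIcc_of_le hs.1] at hq
  exact hφ _ (hu q hq.1).1

lemma le_exp_mul_of_eq_sub_integral (hφ : ∀ y, 0 ≤ y → φ y = b * y + r y)
    (hr : ContinuousOn r (Ici 0)) (hr₀ : ∀ y, 0 ≤ y → 0 ≤ r y)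
    (hu : ∀ s, 0 ≤ s → 0 ≤ u s ∧ u s = l - ∫ q in 0..s, φ (u q)) (ht : 0 ≤ t)
    (hint : IntervalIntegrable (fun s ↦ φ (u s)) volume 0 t) :
    u t ≤ Real.exp (-(b * t)) * l := by
  rw [eq_exp_mul_sub_integral_of_eq_sub_integral hφ hr hu ht hint]
  gcongr
  exact sub_le_self _ (intervalIntegral.integral_nonneg ht fun s hs ↦
    mul_nonneg (Real.exp_pos _).le (hr₀ _ (hu s hs.1).1))

lemma exp_neg_mul_le_exp_abs_mul {b t T : ℝ} (ht : t ∈ Icc 0 T) :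
    Real.exp (-(b * t)) ≤ Real.exp (|b| * T) := by
  rw [← neg_mul]
  exact Real.exp_le_exp.mpr (mul_le_mul (neg_le_abs b) ht.2 ht.1 (abs_nonneg b))

lemma intervalIntegrable_of_eq_sub_integral (hφ : ∀ y, 0 ≤ y → φ y = b * y + r y)
    (hr : ContinuousOn r (Ici 0)) (hr₀ : ∀ y, 0 ≤ y → 0 ≤ r y) (hl : 0 ≤ l)
    (hu : ∀ s, 0 ≤ s → 0 ≤ u s ∧ u s = l - ∫ q in 0..s, φ (u q)) (ht : 0 ≤ t) :
    IntervalIntegrable (fun s ↦ φ (u s)) volume 0 t := by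
  have hφc : ContinuousOn φ (Ici 0) :=
    ((continuousOn_const.mul continuousOn_id).add hr).congr fun y hy ↦ hφ y hy
  have hcompact : IsCompact (Icc 0 (Real.exp (|b| * t) * l)) := isCompact_Icc
  obtain ⟨B, hB⟩ := hcompact.exists_bound_of_continuousOn (hφc.mono Icc_subset_Ici_self)
  refine intervalIntegrable_of_norm_le_of_eq_const (B := B) (c := φ l) ht (fun s hs hint ↦ ?_)
    fun s hs hint ↦ ?_
  · refine hB _ ⟨(hu s hs.1).1, (le_exp_mul_of_eq_sub_integral hφ hr hr₀ hu hs.1 hint).trans ?_⟩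
    exact mul_le_mul_of_nonneg_right (exp_neg_mul_le_exp_abs_mul hs) hl
  · -- A non-integrable integrand has integral `0`, so that `u s = l`.
    rw [(hu s hs.1).2, intervalIntegral.integral_undef hint, sub_zero]

end IntegralEquation

section Volterra

variable {E : Type*} [NormedAddCommGroup E] [NormedSpace ℝ E] {a b : ℝ}

/-- Integration from `a`, as a bounded operator on `C([a, b], E)`. -/
def volterra (hab : a ≤ b) : C(Icc a b, E) →L[ℝ] C(Icc a b, E) :=
  LinearMap.mkContinuous
    { toFun f := ⟨fun t ↦ ∫ s in a..t, IccExtend hab f s,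
        (intervalIntegral.continuous_primitive
          (fun _ _ ↦ f.continuous.Icc_extend'.intervalIntegrable _ _) a).comp
          continuous_subtype_val⟩
      map_add' f g := ContinuousMap.ext fun t ↦ intervalIntegral.integral_add
        (f.continuous.Icc_extend'.intervalIntegrable _ _)
        (g.continuous.Icc_extend'.intervalIntegrable _ _)
      map_smul' c f := ContinuousMap.ext fun t ↦ intervalIntegral.integral_smul c _ }
    (b - a) fun f ↦ (ContinuousMap.norm_le _ (by have := sub_nonneg.mpr hab; positivity)).mpr
      fun t ↦ by
        calc ‖∫ s in a..t, IccExtend hab f s‖ ≤ ‖f‖ * |t - a| :=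
              intervalIntegral.norm_integral_le_of_norm_le_const fun s _ ↦ f.norm_coe_le_norm _
          _ ≤ (b - a) * ‖f‖ := by
              rw [abs_of_nonneg (sub_nonneg.mpr t.2.1), mul_comm]
              gcongr
              exact t.2.2

lemma volterra_apply (hab : a ≤ b) {f : C(Icc a b, E)} {g : ℝ → E}
    (hfg : ∀ s : Icc a b, f s = g s) (t : Icc a b) : volterra hab f t = ∫ s in a..t, g s := by
  refine intervalIntegral.integral_congr fun s hs ↦ ?_
  rw [uIcc_of_le t.2.1] at hs
  exact (IccExtend_of_mem hab f ⟨hs.1, hs.2.trans t.2.2⟩).trans (hfg _)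

end Volterra

section Cumulant

lemma hasExpansion_of_fixedPoint {S : Type*} [TopologicalSpace S] [CompactSpace S]
    {r : ℝ → ℝ} (hr : ∀ n : ℕ, ∃ P : ℝ[X],
      (fun y ↦ r y - y ^ 2 * P.eval y) =O[𝓟 (Ici 0)] fun y ↦ y ^ (n + 2))
    {w H : ℝ → C(S, ℝ)} (hw : w =O[𝓝[>] 0] fun _ ↦ (1 : ℝ)) (hw₀ : ∀ l, 0 < l → 0 ≤ w l)
    (hH : ∀ l, 0 < l → ∀ s, l ^ 2 * H l s = r (l * w l s))
    (e : C(S, ℝ)) (L : C(S, ℝ) →L[ℝ] C(S, ℝ)) (hfix : ∀ l, 0 < l → w l = e + l • L (H l))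
    (n : ℕ) : HasExpansion n w := by
  induction n with
  | zero => exact .of_isBigO (by simpa only [pow_zero] using hw)
  | succ n ih =>
    obtain ⟨P, hP⟩ := hr n
    have hLH : HasExpansion (n + 1) fun l ↦ l • L (H l) :=
      ((ih.of_comp hP hw₀ hH).clm_apply L).id_smul
    refine ((HasExpansion.const e).add hLH).congr ?_
    filter_upwards [self_mem_nhdsWithin] with l hl
    exact (hfix l hl).symm

lemma exists_continuousMap_apply_eq {S : Type*} [TopologicalSpace S] {f : ℝ → S → ℝ}
    (hf : ∀ l, 0 < l → Continuous (f l)) :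
    ∃ F : ℝ → C(S, ℝ), ∀ l, 0 < l → ∀ s, F l s = f l s :=
  ⟨fun l ↦ .mkD (f l) 0, fun _ hl _ ↦ ContinuousMap.mkD_apply_of_continuous (hf _ hl)⟩

/-- The operator `L f (t) = -∫₀ᵗ e^{-b(t - s)} f(s) ds` on `C([0, T], ℝ)`, for which the ratio
`w = v / l` of a cumulant solves `w = e^{-bt} + l L(r(l w) / l²)`. -/
def negDuhamel (b : ℝ) {T : ℝ} (hT : 0 ≤ T) : C(Icc 0 T, ℝ) →L[ℝ] C(Icc 0 T, ℝ) :=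
  -(ContinuousLinearMap.mul ℝ _ ⟨fun t : Icc 0 T ↦ Real.exp (-(b * t)), by fun_prop⟩ ∘L
    volterra hT ∘L
    ContinuousLinearMap.mul ℝ _ ⟨fun t : Icc 0 T ↦ Real.exp (b * t), by fun_prop⟩)

lemma negDuhamel_apply {b T : ℝ} (hT : 0 ≤ T) {f : C(Icc 0 T, ℝ)} {g : ℝ → ℝ}
    (hfg : ∀ s : Icc 0 T, f s = g s) (t : Icc 0 T) :
    negDuhamel b hT f t = -(Real.exp (-(b * t)) * ∫ s in 0..t, Real.exp (b * s) * g s) :=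
  congrArg (fun y ↦ -(Real.exp (-(b * t)) * y))
    (volterra_apply hT (fun s ↦ congrArg (Real.exp (b * s) * ·) (hfg s)) t)

variable {φ r : ℝ → ℝ} {b T : ℝ} {v : ℝ → ℝ → ℝ}

namespace IsCumulant

lemma intervalIntegrable (hv : IsCumulant φ v) (hφ : ∀ y, 0 ≤ y → φ y = b * y + r y)
    (hr : ContinuousOn r (Ici 0)) (hr₀ : ∀ y, 0 ≤ y → 0 ≤ r y) {l t : ℝ} (hl : 0 ≤ l)
    (ht : 0 ≤ t) : IntervalIntegrable (fun s ↦ φ (v s l)) volume 0 t :=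
  intervalIntegrable_of_eq_sub_integral hφ hr hr₀ hl (hv l hl) ht

lemma continuousOn_s5 (hv : IsCumulant φ v) (hφ : ∀ y, 0 ≤ y → φ y = b * y + r y)
    (hr : ContinuousOn r (Ici 0)) (hr₀ : ∀ y, 0 ≤ y → 0 ≤ r y) {l : ℝ} (hl : 0 ≤ l) (hT : 0 ≤ T) :
    ContinuousOn (fun t ↦ v t l) (Icc 0 T) :=
  continuousOn_of_eq_sub_integral hT (hv.intervalIntegrable hφ hr hr₀ hl hT)
    fun t ht ↦ (hv l hl t ht.1).2

lemma le_exp_mul (hv : IsCumulant φ v) (hφ : ∀ y, 0 ≤ y → φ y = b * y + r y)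
    (hr : ContinuousOn r (Ici 0)) (hr₀ : ∀ y, 0 ≤ y → 0 ≤ r y) {l t : ℝ} (hl : 0 ≤ l)
    (ht : t ∈ Icc 0 T) : v t l ≤ Real.exp (|b| * T) * l :=
  (le_exp_mul_of_eq_sub_integral hφ hr hr₀ (hv l hl) ht.1
    (hv.intervalIntegrable hφ hr hr₀ hl ht.1)).trans
    (mul_le_mul_of_nonneg_right (exp_neg_mul_le_exp_abs_mul ht) hl)

variable {w : ℝ → C(Icc 0 T, ℝ)}

lemma nonneg_of_mul_eq (hv : IsCumulant φ v)
    (hw : ∀ l, 0 < l → ∀ t : Icc 0 T, l * w l t = v t l) {l : ℝ} (hl : 0 < l) : 0 ≤ w l :=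
  fun t ↦ nonneg_of_mul_nonneg_right ((hv l hl.le t t.2.1).1.trans_eq (hw l hl t).symm) hl

lemma isBigO_one_of_mul_eq (hv : IsCumulant φ v) (hφ : ∀ y, 0 ≤ y → φ y = b * y + r y)
    (hr : ContinuousOn r (Ici 0)) (hr₀ : ∀ y, 0 ≤ y → 0 ≤ r y)
    (hw : ∀ l, 0 < l → ∀ t : Icc 0 T, l * w l t = v t l) :
    w =O[𝓝[>] 0] fun _ ↦ (1 : ℝ) := by
  refine .of_bound (Real.exp (|b| * T)) ?_
  filter_upwards [self_mem_nhdsWithin] with l (hl : 0 < l)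
  refine (ContinuousMap.norm_le _ (by positivity)).mpr fun t ↦ ?_
  have hwt : 0 ≤ w l t := hv.nonneg_of_mul_eq hw hl t
  rw [Real.norm_of_nonneg hwt, norm_one, mul_one]
  refine le_of_mul_le_mul_left ?_ hl
  rw [hw l hl, mul_comm l]
  exact hv.le_exp_mul hφ hr hr₀ hl.le t.2

lemma eq_exp_add_smul_negDuhamel (hv : IsCumulant φ v) (hφ : ∀ y, 0 ≤ y → φ y = b * y + r y)
    (hr : ContinuousOn r (Ici 0)) (hr₀ : ∀ y, 0 ≤ y → 0 ≤ r y) (hT : 0 ≤ T)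
    {l : ℝ} (hl : 0 < l) {w H : C(Icc 0 T, ℝ)} (hw : ∀ t : Icc 0 T, l * w t = v t l)
    (hH : ∀ t, l ^ 2 * H t = r (l * w t)) :
    w = (⟨fun t ↦ Real.exp (-(b * t)), by fun_prop⟩ : C(Icc 0 T, ℝ)) + l • negDuhamel b hT H := by
  ext t
  have hH' : ∀ s : Icc 0 T, H s = r (v s l) * (l ^ 2)⁻¹ := fun s ↦ by
    rw [← hw, ← hH]
    field_simp
  refine mul_left_cancel₀ hl.ne' ?_
  rw [hw, eq_exp_mul_sub_integral_of_eq_sub_integral hφ hr (hv l hl.le) t.2.1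
    (hv.intervalIntegrable hφ hr hr₀ hl.le t.2.1)]
  simp only [ContinuousMap.add_apply, ContinuousMap.coe_mk, ContinuousMap.smul_apply, smul_eq_mul,
    negDuhamel_apply hT (g := fun s ↦ r (v s l) * (l ^ 2)⁻¹) hH', ← mul_assoc,
    intervalIntegral.integral_mul_const]
  field_simp
  ring

lemma hasExpansion_of_mul_eq (hv : IsCumulant φ v) (hφ : ∀ y, 0 ≤ y → φ y = b * y + r y)
    (hr : ContinuousOn r (Ici 0)) (hr₀ : ∀ y, 0 ≤ y → 0 ≤ r y)
    (hrP : ∀ n : ℕ, ∃ P : ℝ[X],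
      (fun y ↦ r y - y ^ 2 * P.eval y) =O[𝓟 (Ici 0)] fun y ↦ y ^ (n + 2))
    (hT : 0 ≤ T) (hw : ∀ l, 0 < l → ∀ t : Icc 0 T, l * w l t = v t l) (n : ℕ) :
    HasExpansion n w := by
  have hcont : ∀ l, 0 < l → Continuous fun t ↦ r (l * w l t) / l ^ 2 := fun l hl ↦
    (hr.comp_continuous (continuous_const.mul (w l).continuous) fun t ↦
      mul_nonneg hl.le (hv.nonneg_of_mul_eq hw hl t)).div_const _
  obtain ⟨H, hH⟩ := exists_continuousMap_apply_eq hcont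
  have hH' : ∀ l, 0 < l → ∀ t, l ^ 2 * H l t = r (l * w l t) := fun l hl t ↦ by
    rw [hH l hl, mul_div_cancel₀ _ (pow_ne_zero 2 hl.ne')]
  exact hasExpansion_of_fixedPoint hrP (hv.isBigO_one_of_mul_eq hφ hr hr₀ hw)
    (fun l ↦ hv.nonneg_of_mul_eq hw) hH' _ (negDuhamel b hT)
    (fun l hl ↦ hv.eq_exp_add_smul_negDuhamel hφ hr hr₀ hT hl (hw l hl) (hH' l hl)) n

end IsCumulant

end Cumulant

section ForwardDifference

lemma fwdDiff_iter_pow_self {R : Type*} [CommRing R] (k n : ℕ) (l : R) :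
    (Δ_[l])^[n] (fun y ↦ y ^ k) l = l ^ k * (Δ_[1])^[n] (fun y ↦ y ^ k) 1 := by
  simp only [fwdDiff_iter_eq_sum_shift, Finset.mul_sum, mul_smul_comm, ← mul_pow, mul_add, mul_one]

lemma fwdDiff_iter_self_isBigO_pow {E : Type*} [NormedAddCommGroup E] [NormedSpace ℝ E] {m n : ℕ}
    {F : ℝ → E}
    (hF : F =O[𝓝[>] 0] fun l ↦ l ^ m) :
    (fun l ↦ (Δ_[l])^[n] F l) =O[𝓝[>] 0] fun l ↦ l ^ m := by
  simp only [fwdDiff_iter_eq_sum_shift, ← Int.cast_smul_eq_zsmul ℝ]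
  refine IsBigO.fun_sum fun k _ ↦ ?_
  have hk : Tendsto (fun l : ℝ ↦ l + k • l) (𝓝[>] 0) (𝓝[>] 0) := by
    refine tendsto_nhdsWithin_iff.mpr ⟨?_, ?_⟩
    · have hcont : Continuous fun l : ℝ ↦ l + k • l := by fun_prop
      exact (hcont.tendsto' 0 0 (by simp)).mono_left nhdsWithin_le_nhds
    · filter_upwards [self_mem_nhdsWithin] with l (hl : 0 < l)
      exact add_pos_of_pos_of_nonneg hl (nsmul_nonneg hl.le k)
  have hscale : (fun l : ℝ ↦ (l + k • l) ^ m) = fun l ↦ (1 + k : ℝ) ^ m * l ^ m := by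
    ext l
    rw [← mul_pow, nsmul_eq_mul]
    ring
  have hshift := hF.comp_tendsto hk
  simp only [Function.comp_def, hscale] at hshift
  exact (hshift.trans (isBigO_const_mul_self _ _ _)).const_smul_left _

variable {A : Type*} [NormedCommRing A] [NormedAlgebra ℝ A]

lemma fwdDiff_iter_eval_monomial_self (k n : ℕ) (a : A) (l : ℝ) :
    (Δ_[l])^[n] (fun s ↦ (monomial k a).eval (algebraMap ℝ A s)) l =
      (l ^ k * (Δ_[1])^[n] (fun s ↦ s ^ k) 1) • a := by
  rw [← fwdDiff_iter_pow_self]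
  simp only [fwdDiff_iter_eq_sum_shift, eval_monomial, ← map_pow, mul_comm a, ← Algebra.smul_def,
    Finset.sum_smul, smul_assoc]

lemma fwdDiff_iter_eval_self_isBigO_pow (n : ℕ) (p : A[X]) :
    (fun l : ℝ ↦ (Δ_[l])^[n] (fun s ↦ p.eval (algebraMap ℝ A s)) l) =O[𝓝[>] 0]
      fun l ↦ l ^ n := by
  induction p using Polynomial.induction_on' with
  | add p q hp hq =>
    refine (hp.add hq).congr_left fun l ↦ ?_
    simp only [eval_add]
    exact (congrFun (fwdDiff_iter_add l _ _ n) l).symm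
  | monomial k a =>
    simp only [fwdDiff_iter_eval_monomial_self]
    rcases lt_or_ge k n with hk | hk
    · simpa only [fwdDiff_iter_pow_eq_zero_of_lt hk, Pi.zero_apply, mul_zero, zero_smul]
        using isBigO_zero _ _
    · have hconst := isBigO_const_const ((Δ_[1])^[n] (fun s : ℝ ↦ s ^ k) 1 • a)
        (one_ne_zero (α := ℝ)) (𝓝[>] (0 : ℝ))
      simpa only [mul_smul, smul_eq_mul, mul_one] using
        (pow_isBigO_pow_nhdsGT_zero hk).smul hconst

lemma HasExpansion.fwdDiff_iter_isBigO_pow {F : ℝ → A} {n : ℕ} (hF : HasExpansion n F) :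
    (fun l ↦ (Δ_[l])^[n] F l) =O[𝓝[>] 0] fun l ↦ l ^ n := by
  obtain ⟨p, hp⟩ := hF
  have hsum :=
    (fwdDiff_iter_self_isBigO_pow (n := n) hp).add (fwdDiff_iter_eval_self_isBigO_pow n p)
  refine hsum.congr_left fun l ↦ ?_
  rw [← Pi.add_apply, ← fwdDiff_iter_add]
  simp only [Pi.add_def, sub_add_cancel]

lemma fwdDiff_iter_integral {M α E : Type*} [AddCommMonoid M] [MeasurableSpace α]
    [NormedAddCommGroup E] [NormedSpace ℝ E] {μ : Measure α} {g : M → α → E} {h y : M} {n : ℕ}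
    (hg : ∀ k : ℕ, Integrable (g (y + k • h)) μ) :
    (Δ_[h])^[n] (fun s ↦ ∫ z, g s z ∂μ) y = ∫ z, (Δ_[h])^[n] (fun s ↦ g s z) y ∂μ := by
  simp only [fwdDiff_iter_eq_sum_shift, ← Int.cast_smul_eq_zsmul ℝ]
  rw [integral_finsetSum _ fun k _ ↦ (hg k).fun_smul _]
  simp only [integral_smul]

lemma fwdDiff_iter_exp_neg_mul (n : ℕ) (h s z : ℝ) :
    (Δ_[h])^[n] (fun s ↦ Real.exp (-(s * z))) s =
      (Real.exp (-(h * z)) - 1) ^ n * Real.exp (-(s * z)) :=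
  fwdDiff_addChar_eq
    { toFun := fun s ↦ Real.exp (-(s * z))
      map_zero_eq_one' := by simp
      map_add_eq_mul' := fun s t ↦ by rw [← Real.exp_add, add_mul, neg_add] } s h n

end ForwardDifference

section LaplaceTransform

variable {q : Measure ℝ} {n : ℕ}

lemma integrable_exp_neg_mul_s5 [IsFiniteMeasure q] (hq : ∀ᵐ z ∂q, 0 ≤ z) {s : ℝ} (hs : 0 ≤ s) :
    Integrable (fun z ↦ Real.exp (-(s * z))) q := by
  refine .of_bound (by fun_prop) 1 ?_
  filter_upwards [hq] with z hz
  rw [Real.norm_of_nonneg (Real.exp_pos _).le, Real.exp_le_one_iff, neg_nonpos]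
  exact mul_nonneg hs hz

lemma tendsto_exp_neg_mul_one_sub_exp_div_pow (n : ℕ) (z : ℝ) :
    Tendsto (fun l ↦ ((1 - Real.exp (-(l * z))) / l) ^ n * Real.exp (-(l * z))) (𝓝[>] 0)
      (𝓝 (z ^ n)) := by
  have hexp : Tendsto (fun l ↦ Real.exp (-(l * z))) (𝓝[>] 0) (𝓝 1) := by
    have hcont : Continuous fun l ↦ Real.exp (-(l * z)) := by fun_prop
    exact (hcont.tendsto' 0 1 (by simp)).mono_left nhdsWithin_le_nhds
  have hderiv : HasDerivAt (fun l ↦ 1 - Real.exp (-(l * z))) z 0 := by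
    simpa using ((hasDerivAt_id (0 : ℝ)).mul_const z).neg.exp.const_sub 1
  have hslope : Tendsto (fun l ↦ (1 - Real.exp (-(l * z))) / l) (𝓝[>] 0) (𝓝 z) := by
    refine (hderiv.tendsto_slope.mono_left (nhdsGT_le_nhdsNE 0)).congr fun l ↦ ?_
    simp [slope_def_field]
  simpa using (hslope.pow n).mul hexp

lemma lintegral_one_sub_exp_div_pow_mul_exp [IsFiniteMeasure q] (hq : ∀ᵐ z ∂q, 0 ≤ z) {l : ℝ}
    (hl : 0 < l) :
    ∫⁻ z, ENNReal.ofReal (((1 - Real.exp (-(l * z))) / l) ^ n * Real.exp (-(l * z))) ∂q =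
      ENNReal.ofReal (‖(Δ_[l])^[n] (fun s ↦ ∫ z, Real.exp (-(s * z)) ∂q) l‖ / l ^ n) := by
  have hshift (k : ℕ) : 0 ≤ l + k • l := add_nonneg hl.le (nsmul_nonneg hl.le k)
  have hle : ∀ᵐ z ∂q, Real.exp (-(l * z)) ≤ 1 := hq.mono fun z hz ↦
    Real.exp_le_one_iff.mpr (neg_nonpos.mpr (mul_nonneg hl.le hz))
  have hnonneg : ∀ᵐ z ∂q, 0 ≤ ((1 - Real.exp (-(l * z))) / l) ^ n * Real.exp (-(l * z)) :=
    hle.mono fun z hz ↦ by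
      have := sub_nonneg.mpr hz
      positivity
  have hint : Integrable
      (fun z ↦ ((1 - Real.exp (-(l * z))) / l) ^ n * Real.exp (-(l * z))) q := by
    refine (integrable_exp_neg_mul_s5 hq hl.le).bdd_mul (c := (1 / l) ^ n) (by fun_prop) ?_
    filter_upwards [hle] with z hz
    have := sub_nonneg.mpr hz
    rw [Real.norm_of_nonneg (by positivity)]
    gcongr
    exact sub_le_self _ (Real.exp_pos _).le
  have hscale (z : ℝ) : (Real.exp (-(l * z)) - 1) ^ n * Real.exp (-(l * z)) =
      (-l) ^ n * (((1 - Real.exp (-(l * z))) / l) ^ n * Real.exp (-(l * z))) := by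
    rw [← mul_assoc, ← mul_pow, neg_mul, mul_div_cancel₀ _ hl.ne', neg_sub]
  rw [← ofReal_integral_eq_lintegral_ofReal hint hnonneg,
    fwdDiff_iter_integral fun k ↦ integrable_exp_neg_mul_s5 hq (hshift k)]
  simp only [fwdDiff_iter_exp_neg_mul, hscale]
  rw [integral_const_mul, norm_mul, norm_pow, norm_neg, Real.norm_of_nonneg hl.le,
    Real.norm_of_nonneg (integral_nonneg_of_ae hnonneg), mul_div_cancel_left₀ _ (by positivity)]

lemma lintegral_pow_le_of_norm_fwdDiff_iter_le [IsFiniteMeasure q] (hq : ∀ᵐ z ∂q, 0 ≤ z) {c : ℝ}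
    (hc : ∀ᶠ l in 𝓝[>] 0,
      ‖(Δ_[l])^[n] (fun s ↦ ∫ z, Real.exp (-(s * z)) ∂q) l‖ ≤ c * l ^ n) :
    ∫⁻ z, ENNReal.ofReal (z ^ n) ∂q ≤ ENNReal.ofReal c := by
  calc ∫⁻ z, ENNReal.ofReal (z ^ n) ∂q
      = ∫⁻ z, liminf (fun l ↦ ENNReal.ofReal
          (((1 - Real.exp (-(l * z))) / l) ^ n * Real.exp (-(l * z)))) (𝓝[>] 0) ∂q :=
        lintegral_congr fun z ↦ (ENNReal.tendsto_ofReal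
          (tendsto_exp_neg_mul_one_sub_exp_div_pow n z)).liminf_eq.symm
    _ ≤ liminf (fun l ↦ ∫⁻ z, ENNReal.ofReal
          (((1 - Real.exp (-(l * z))) / l) ^ n * Real.exp (-(l * z))) ∂q) (𝓝[>] 0) :=
        lintegral_liminf_le fun l ↦ by fun_prop
    _ ≤ ENNReal.ofReal c := by
        refine liminf_le_of_frequently_le' (Eventually.frequently ?_)
        filter_upwards [hc, self_mem_nhdsWithin] with l hcl (hl : 0 < l)
        rw [lintegral_one_sub_exp_div_pow_mul_exp hq hl]
        exact ENNReal.ofReal_le_ofReal ((div_le_iff₀ (pow_pos hl n)).mpr hcl)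

lemma fwdDiff_iter_continuousMap_apply {M S : Type*} [AddCommMonoid M] [TopologicalSpace S]
    (F : M → C(S, ℝ)) (h y : M) (s : S) :
    (Δ_[h])^[n] F y s = (Δ_[h])^[n] (fun x ↦ F x s) y := by
  simp only [fwdDiff_iter_eq_sum_shift, ContinuousMap.sum_apply, ContinuousMap.smul_apply]

lemma HasExpansion.exists_lintegral_pow_le {S : Type*} [TopologicalSpace S] [CompactSpace S]
    {F : ℝ → C(S, ℝ)} (hF : HasExpansion n F) {q : S → Measure ℝ}
    [∀ s, IsFiniteMeasure (q s)] (hq : ∀ s, ∀ᵐ z ∂q s, 0 ≤ z)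
    (hFq : ∀ l, 0 < l → ∀ s, F l s = ∫ z, Real.exp (-(l * z)) ∂q s) :
    ∃ c : ℝ, ∀ s, ∫⁻ z, ENNReal.ofReal (z ^ n) ∂q s ≤ ENNReal.ofReal c := by
  obtain ⟨c, hc⟩ := hF.fwdDiff_iter_isBigO_pow.bound
  refine ⟨c, fun s ↦ lintegral_pow_le_of_norm_fwdDiff_iter_le (hq s) ?_⟩
  filter_upwards [hc, self_mem_nhdsWithin] with l hcl (hl : 0 < l)
  have hshift (k : ℕ) : 0 < l + k • l := add_pos_of_pos_of_nonneg hl (nsmul_nonneg hl.le k)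
  calc ‖(Δ_[l])^[n] (fun r ↦ ∫ z, Real.exp (-(r * z)) ∂q s) l‖ = ‖(Δ_[l])^[n] F l s‖ := by
        rw [fwdDiff_iter_continuousMap_apply]
        simp only [fwdDiff_iter_eq_sum_shift, hFq _ (hshift _)]
    _ ≤ ‖(Δ_[l])^[n] F l‖ := ContinuousMap.norm_coe_le_norm _ s
    _ ≤ c * l ^ n := by simpa only [Real.norm_of_nonneg (pow_nonneg hl.le n)] using hcl

end LaplaceTransform

section Growth

lemma ConditionB.exists_le_mul_one_add_pow {f : ℝ → ℝ} {K : ℝ} (hf : ConditionB f K) :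
    ∃ N : ℕ, ∃ D : ℝ, ∀ z, 0 ≤ z → f z ≤ D * (1 + z ^ N) := by
  obtain ⟨-, -, hmono, hsub, hone⟩ := hf
  have hf₁ : 0 < f 1 := zero_lt_one.trans (hone 1 zero_le_one)
  obtain ⟨N, hN⟩ := pow_unbounded_of_one_lt (K * f 2) (one_lt_two : (1 : ℝ) < 2)
  have hdyadic (k : ℕ) : f (2 ^ k) ≤ (2 ^ N) ^ k * f 1 := by
    induction k with
    | zero => simp
    | succ k ih =>
      have hk : 0 < f (2 ^ k) := zero_lt_one.trans (hone _ (by positivity))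
      calc f (2 ^ (k + 1)) = f (2 * 2 ^ k) := by rw [pow_succ']
        _ ≤ K * f 2 * f (2 ^ k) := hsub _ _ zero_le_two (by positivity)
        _ ≤ 2 ^ N * ((2 ^ N) ^ k * f 1) := by gcongr
        _ = (2 ^ N) ^ (k + 1) * f 1 := by ring
  refine ⟨N, 2 ^ N * f 1, fun z hz ↦ ?_⟩
  rcases le_total z 1 with hz₁ | hz₁
  · calc f z ≤ f 1 := hmono hz (mem_Ici.mpr zero_le_one) hz₁
      _ ≤ 2 ^ N * f 1 := le_mul_of_one_le_left hf₁.le (one_le_pow₀ one_le_two)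
      _ ≤ 2 ^ N * f 1 * (1 + z ^ N) :=
        le_mul_of_one_le_right (by positivity) (le_add_of_nonneg_right (by positivity))
  · obtain ⟨k, hkz, hzk⟩ := exists_nat_pow_near hz₁ (one_lt_two : (1 : ℝ) < 2)
    calc f z ≤ f (2 ^ (k + 1)) := hmono hz (mem_Ici.mpr (by positivity)) hzk.le
      _ ≤ (2 ^ N) ^ (k + 1) * f 1 := hdyadic _
      _ = 2 ^ N * f 1 * (2 ^ k) ^ N := by ring
      _ ≤ 2 ^ N * f 1 * (1 + z ^ N) := by
        gcongr
        exact (pow_le_pow_left₀ (by positivity) hkz N).trans (le_add_of_nonneg_left zero_le_one)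

lemma lintegral_ofReal_le_of_le_mul_one_add_pow {q : Measure ℝ} [IsProbabilityMeasure q]
    (hq : ∀ᵐ z ∂q, 0 ≤ z) {f : ℝ → ℝ} {N : ℕ} {D c : ℝ} (hf : ∀ z, 0 ≤ z → f z ≤ D * (1 + z ^ N))
    (hc : ∫⁻ z, ENNReal.ofReal (z ^ N) ∂q ≤ ENNReal.ofReal c) :
    ∫⁻ z, ENNReal.ofReal (f z) ∂q ≤ ENNReal.ofReal (D * (1 + max c 0)) := by
  calc ∫⁻ z, ENNReal.ofReal (f z) ∂q
      ≤ ∫⁻ z, ENNReal.ofReal D * (1 + ENNReal.ofReal (z ^ N)) ∂q := by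
        refine lintegral_mono_ae ?_
        filter_upwards [hq] with z hz
        rw [← ENNReal.ofReal_one, ← ENNReal.ofReal_add zero_le_one (by positivity),
          ← ENNReal.ofReal_mul' (by positivity)]
        exact ENNReal.ofReal_le_ofReal (hf z hz)
    _ = ENNReal.ofReal D * (1 + ∫⁻ z, ENNReal.ofReal (z ^ N) ∂q) := by
        rw [lintegral_const_mul _ (by fun_prop), lintegral_add_left measurable_const,
          lintegral_one, measure_univ]
    _ ≤ ENNReal.ofReal D * (1 + ENNReal.ofReal (max c 0)) := by
        gcongr
        exact hc.trans (ENNReal.ofReal_le_ofReal (le_max_left _ _))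
    _ = ENNReal.ofReal (D * (1 + max c 0)) := by
        rw [← ENNReal.ofReal_one, ← ENNReal.ofReal_add zero_le_one (le_max_right _ _),
          ← ENNReal.ofReal_mul' (by positivity)]

end Growth

section Moments

variable {φ : ℝ → ℝ} {β σ : ℝ} {m : Measure ℝ} {v : ℝ → ℝ → ℝ} {Q : ℝ → ℝ → Measure ℝ} {x T : ℝ}

lemma IsCBSemigroup.ae_nonneg (hQ : IsCBSemigroup v Q) {t : ℝ} (ht : 0 ≤ t) (hx : 0 ≤ x) :
    ∀ᵐ z ∂Q t x, 0 ≤ z := by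
  simpa only [ae_iff, not_le, Iio_def] using (hQ t x ht hx).2.1

lemma IsBranchingMechanism.exists_hasExpansion (hφ : IsBranchingMechanism φ β σ m)
    (hm : ∀ n : ℕ, 1 ≤ n → IntegrableOn (fun z ↦ z ^ n) (Ioi 1) m) (hv : IsCumulant φ v)
    (hT : 0 ≤ T) : ∃ w : ℝ → C(Icc 0 T, ℝ),
      (∀ l, 0 < l → ∀ t : Icc 0 T, l * w l t = v t l) ∧ ∀ n, HasExpansion n w := by
  have hm₀ : ∀ᵐ z ∂m, 0 ≤ z := hφ.ae_pos.mono fun _ ↦ le_of_lt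
  have hpow (k : ℕ) : Integrable (fun z ↦ z ^ (k + 2)) m :=
    hφ.integrable_pow (by lia) (hm _ (by lia))
  have hlin : ∀ y, 0 ≤ y → φ y = linearCoeff β m * y + nonlinearPart σ m y := fun y hy ↦
    hφ.eq_linear_add_nonlinearPart (by simpa using hm 1 le_rfl) (hpow 0) hy
  have hr := continuousOn_nonlinearPart (σ := σ) hm₀ (hpow 0)
  have hr₀ : ∀ y, 0 ≤ y → 0 ≤ nonlinearPart σ m y := fun y _ ↦ nonlinearPart_nonneg y
  have hcont : ∀ l, 0 < l → Continuous fun t : Icc 0 T ↦ v t l / l := fun l hl ↦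
    (hv.continuousOn_s5 hlin hr hr₀ hl.le hT).domRestrict.div_const l
  obtain ⟨w, hw⟩ := exists_continuousMap_apply_eq hcont
  have hlw : ∀ l, 0 < l → ∀ t : Icc 0 T, l * w l t = v t l := fun l hl t ↦ by
    rw [hw l hl, mul_div_cancel₀ _ hl.ne']
  exact ⟨w, hlw, hv.hasExpansion_of_mul_eq hlin hr hr₀
    (exists_polynomial_nonlinearPart_isBigO hm₀ hpow) hT hlw⟩

lemma IsCBSemigroup.exists_lintegral_pow_le (hφ : IsBranchingMechanism φ β σ m)
    (hm : ∀ n : ℕ, 1 ≤ n → IntegrableOn (fun z ↦ z ^ n) (Ioi 1) m) (hv : IsCumulant φ v)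
    (hQ : IsCBSemigroup v Q) (hx : 0 ≤ x) (hT : 0 ≤ T) (n : ℕ) :
    ∃ c : ℝ, ∀ t ∈ Icc 0 T, ∫⁻ z, ENNReal.ofReal (z ^ n) ∂Q t x ≤ ENNReal.ofReal c := by
  obtain ⟨w, hw, hexp⟩ := hφ.exists_hasExpansion hm hv hT
  have hxw₀ : ∀ l, 0 < l → 0 ≤ x • w l := fun l hl ↦
    smul_nonneg hx (hv.nonneg_of_mul_eq hw hl)
  have hxw : HasExpansion n fun l ↦ x • w l :=
    (hexp n).clm_apply (x • ContinuousLinearMap.id ℝ C(Icc 0 T, ℝ))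
  let F : ℝ → C(Icc 0 T, ℝ) := fun l ↦ ⟨fun t ↦ Real.exp (-(l * (x • w l) t)), by fun_prop⟩
  have hF : HasExpansion n F := hxw.exp_neg hxw₀ fun _ _ _ ↦ rfl
  have (t : Icc 0 T) : IsProbabilityMeasure (Q t x) := (hQ t x t.2.1 hx).1
  obtain ⟨c, hc⟩ := hF.exists_lintegral_pow_le (q := fun t ↦ Q t x)
    (fun t ↦ hQ.ae_nonneg t.2.1 hx) fun l hl t ↦ by
      rw [(hQ t x t.2.1 hx).2.2 l hl.le, ← hw l hl t, mul_left_comm]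
      rfl
  exact ⟨c, fun t ht ↦ hc ⟨t, ht⟩⟩

end Moments

theorem cb_f_moment_locally_bounded_poly_general
    (f : ℝ → ℝ) (N : ℕ) (D : ℝ) (hf : ∀ z, 0 ≤ z → f z ≤ D * (1 + z ^ N))
    (φ : ℝ → ℝ) (β σ : ℝ) (m : Measure ℝ) (hφ : IsBranchingMechanism φ β σ m)
    (hm : ∀ n : ℕ, 1 ≤ n → (∫⁻ z in Ioi 1, ENNReal.ofReal (z ^ n) ∂m) < ⊤)
    (v : ℝ → ℝ → ℝ) (hv : IsCumulant φ v) (Q : ℝ → ℝ → Measure ℝ) (hQ : IsCBSemigroup v Q)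
    (x : ℝ) (hx : 0 ≤ x) :
    (∀ t, 0 ≤ t → (∫⁻ z, ENNReal.ofReal (f z) ∂(Q t x)) < ⊤) ∧
      ∀ T, 0 < T → ∃ C : ℝ, ∀ t ∈ Icc (0 : ℝ) T,
        (∫⁻ z, ENNReal.ofReal (f z) ∂(Q t x)) ≤ ENNReal.ofReal C := by
  have hbound : ∀ T, 0 ≤ T → ∃ C : ℝ, ∀ t ∈ Icc 0 T,
      ∫⁻ z, ENNReal.ofReal (f z) ∂(Q t x) ≤ ENNReal.ofReal C := fun T hT ↦ by
    obtain ⟨c, hc⟩ := hQ.exists_lintegral_pow_le hφ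
      (fun n hn ↦ integrableOn_pow_Ioi_one (hm n hn)) hv hx hT N
    refine ⟨D * (1 + max c 0), fun t ht ↦ ?_⟩
    have := (hQ t x ht.1 hx).1
    exact lintegral_ofReal_le_of_le_mul_one_add_pow (hQ.ae_nonneg ht.1 hx) hf (hc t ht)
  refine ⟨fun t ht ↦ ?_, fun T hT ↦ hbound T hT.le⟩
  obtain ⟨C, hC⟩ := hbound t ht
  exact (hC t (right_mem_Icc.mpr ht)).trans_lt ENNReal.ofReal_lt_top

/-- Lemma 3.7: if the Lévy measure `m` has finite moments of every order on
`(1,∞)`, then for every `x > 0` the function `t ↦ ∫ f dQ_t(x,·)` is finite and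
locally bounded on `[0,∞)`. -/
theorem cb_f_moment_locally_bounded_poly
    (f : ℝ → ℝ) (K : ℝ) (hf : ConditionB f K)
    (φ : ℝ → ℝ) (β σ : ℝ) (m : Measure ℝ)
    (hφ : IsBranchingMechanism φ β σ m) (hGrey : GreyCondition φ)
    (hm : ∀ n : ℕ, 1 ≤ n → (∫⁻ z in Set.Ioi 1, ENNReal.ofReal (z ^ n) ∂m) < ⊤)
    (v : ℝ → ℝ → ℝ) (hv : IsCumulant φ v)
    (Q : ℝ → ℝ → Measure ℝ) (hQ : IsCBSemigroup v Q)
    (x : ℝ) (hx : 0 < x) :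
    (∀ t, 0 ≤ t → (∫⁻ z, ENNReal.ofReal (f z) ∂(Q t x)) < ⊤) ∧
      ∀ T, 0 < T → ∃ C : ℝ, ∀ t ∈ Set.Icc (0:ℝ) T,
        (∫⁻ z, ENNReal.ofReal (f z) ∂(Q t x)) ≤ ENNReal.ofReal C := by
  obtain ⟨N, D, hD⟩ := hf.exists_le_mul_one_add_pow
  exact cb_f_moment_locally_bounded_poly_general f N D hD φ β σ m hφ hm v hv Q hQ x hx.le
end
end
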